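/- arXiv:1805.10071 — 3 statements merged into one kernel-verified Lean document; each statement's English description precedes it below -/
import Mathlib

section
/- Almost surely the sequence M_n = X_n Y_n Z_n converges to a limit M ∈ [0, 1/27], and the law of M gives positive probability to every nonempty open subinterval of (0, 1/27). -/
open MeasureTheory ProbabilityTheory Filter Set Topology

noncomputable section

/-- `γ_n = γ₀ + 4 n`. -/
def rpsGamma (γ₀ : ℝ) (n : ℕ) : ℝ := γ₀ + 4 * n

/-- The increments to the (unnormalised) degrees of the three types
for each of the six possible transitions. -/
def rpsIncr : Fin 6 → ℝ × ℝ × ℝ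
  | 0 => (4, 0, 0)
  | 1 => (0, 4, 0)
  | 2 => (0, 0, 4)
  | 3 => (1, 3, 0)
  | 4 => (0, 1, 3)
  | 5 => (3, 0, 1)

/-- The conditional probability of each of the six possible transitions,
as a function of the current state `(x, y, z)`. -/
def rpsProb (i : Fin 6) (x y z : ℝ) : ℝ :=
  match i with
  | 0 => x ^ 2
  | 1 => y ^ 2
  | 2 => z ^ 2
  | 3 => 2 * x * y
  | 4 => 2 * y * z
  | 5 => 2 * z * x

/-- The rock–paper–scissors preferential attachment chain: an adapted process
`(X n, Y n, Z n)` with values in the simplex `Δ²`, deterministic strictly positive initial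
condition and, conditionally on `𝔉 n`, the six possible transitions have the prescribed
probabilities. -/
structure RPSChain {Ω : Type*} [MeasurableSpace Ω] (μ : Measure Ω) (γ₀ : ℝ) where
  F : Filtration ℕ ‹MeasurableSpace Ω›
  X : ℕ → Ω → ℝ
  Y : ℕ → Ω → ℝ
  Z : ℕ → Ω → ℝ
  adapted_X : Adapted F X
  adapted_Y : Adapted F Y
  adapted_Z : Adapted F Z
  nonneg_X : ∀ n ω, 0 ≤ X n ω
  nonneg_Y : ∀ n ω, 0 ≤ Y n ω
  nonneg_Z : ∀ n ω, 0 ≤ Z n ω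
  sum_eq_one : ∀ n ω, X n ω + Y n ω + Z n ω = 1
  init_X_pos : ∀ ω, 0 < X 0 ω
  init_Y_pos : ∀ ω, 0 < Y 0 ω
  init_Z_pos : ∀ ω, 0 < Z 0 ω
  init_X_const : ∀ ω ω', X 0 ω = X 0 ω'
  init_Y_const : ∀ ω ω', Y 0 ω = Y 0 ω'
  init_Z_const : ∀ ω ω', Z 0 ω = Z 0 ω'
  step : ∀ (n : ℕ) (i : Fin 6),
    μ[Set.indicator
        {ω | X (n+1) ω = (rpsGamma γ₀ n * X n ω + (rpsIncr i).1) / rpsGamma γ₀ (n+1) ∧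
             Y (n+1) ω = (rpsGamma γ₀ n * Y n ω + (rpsIncr i).2.1) / rpsGamma γ₀ (n+1) ∧
             Z (n+1) ω = (rpsGamma γ₀ n * Z n ω + (rpsIncr i).2.2) / rpsGamma γ₀ (n+1)}
        (fun _ => (1 : ℝ)) | F n]
      =ᵐ[μ] fun ω => rpsProb i (X n ω) (Y n ω) (Z n ω)

/-! ### Algebraic facts -/

def rpsStep (γ₀ : ℝ) (n : ℕ) (i : Fin 6) (p : ℝ × ℝ × ℝ) : ℝ × ℝ × ℝ :=
  ((rpsGamma γ₀ n * p.1 + (rpsIncr i).1) / rpsGamma γ₀ (n+1),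
   (rpsGamma γ₀ n * p.2.1 + (rpsIncr i).2.1) / rpsGamma γ₀ (n+1),
   (rpsGamma γ₀ n * p.2.2 + (rpsIncr i).2.2) / rpsGamma γ₀ (n+1))

def rpsM (p : ℝ × ℝ × ℝ) : ℝ := p.1 * p.2.1 * p.2.2

lemma rpsM_cont : Continuous rpsM := by unfold rpsM; fun_prop

lemma rpsGamma_succ (γ₀ : ℝ) (n : ℕ) : rpsGamma γ₀ n = rpsGamma γ₀ (n+1) - 4 := by
  simp [rpsGamma]; ring

lemma rpsGamma_ge {γ₀ : ℝ} (h : 2 ≤ γ₀) (n : ℕ) : 2 ≤ rpsGamma γ₀ n := by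
  have : (0:ℝ) ≤ n := n.cast_nonneg
  simp only [rpsGamma]; linarith

lemma rpsIncr_inj : Function.Injective rpsIncr := by
  intro i j h
  fin_cases i <;> fin_cases j <;> simp_all [rpsIncr]

lemma rpsIncr_mem (i : Fin 6) : 0 ≤ (rpsIncr i).1 ∧ 0 ≤ (rpsIncr i).2.1 ∧ 0 ≤ (rpsIncr i).2.2 ∧
    (rpsIncr i).1 + (rpsIncr i).2.1 + (rpsIncr i).2.2 = 4 := by
  fin_cases i <;> norm_num [rpsIncr]

def rpsSimplex : Set (ℝ × ℝ × ℝ) := {p | 0 ≤ p.1 ∧ 0 ≤ p.2.1 ∧ 0 ≤ p.2.2 ∧ p.1 + p.2.1 + p.2.2 = 1}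

lemma rpsSimplex_compact : IsCompact rpsSimplex := by
  apply (isCompact_Icc (a := ((0,0,0) : ℝ × ℝ × ℝ)) (b := (1,1,1))).of_isClosed_subset
  · unfold rpsSimplex
    simp only [setOf_and]
    refine ((isClosed_le ?_ ?_).inter ((isClosed_le ?_ ?_).inter ((isClosed_le ?_ ?_).inter
      (isClosed_eq ?_ ?_)))) <;> fun_prop
  · rintro ⟨x, y, z⟩ ⟨h1, h2, h3, h4⟩
    simp only at h1 h2 h3 h4
    refine ⟨⟨h1, h2, h3⟩, ⟨?_, ?_, ?_⟩⟩ <;> simp only <;> linarith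

lemma rpsStep_mem {γ₀ : ℝ} (h : 2 ≤ γ₀) (n : ℕ) (i : Fin 6) {p : ℝ × ℝ × ℝ} (hp : p ∈ rpsSimplex) :
    rpsStep γ₀ n i p ∈ rpsSimplex := by
  obtain ⟨h1, h2, h3, h4⟩ := hp
  obtain ⟨i1, i2, i3, i4⟩ := rpsIncr_mem i
  have g0 := rpsGamma_ge h n
  have g1 := rpsGamma_ge h (n+1)
  have g2 := rpsGamma_succ γ₀ n
  refine ⟨?_, ?_, ?_, ?_⟩ <;> simp only [rpsStep]
  · positivity
  · positivity
  · positivity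
  · have e : p.2.2 = 1 - p.1 - p.2.1 := by linarith
    have e' : (rpsIncr i).2.2 = 4 - (rpsIncr i).1 - (rpsIncr i).2.1 := by linarith
    rw [e, e', g2]; field_simp; ring

def rpsE (γ₀ : ℝ) (n : ℕ) (g : ℝ × ℝ × ℝ → ℝ) (p : ℝ × ℝ × ℝ) : ℝ :=
  ∑ i : Fin 6, rpsProb i p.1 p.2.1 p.2.2 * g (rpsStep γ₀ n i p)

lemma rpsE_one (γ₀ : ℝ) (n : ℕ) {p : ℝ × ℝ × ℝ} (hp : p ∈ rpsSimplex) :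
    ∑ i : Fin 6, rpsProb i p.1 p.2.1 p.2.2 = 1 := by
  obtain ⟨h1, h2, h3, h4⟩ := hp
  have e : p.2.2 = 1 - p.1 - p.2.1 := by linarith
  simp only [Fin.sum_univ_six, rpsProb, e]; ring

lemma rpsProb_nonneg (i : Fin 6) {p : ℝ × ℝ × ℝ} (hp : p ∈ rpsSimplex) :
    0 ≤ rpsProb i p.1 p.2.1 p.2.2 := by
  obtain ⟨h1, h2, h3, h4⟩ := hp
  fin_cases i <;> simp only [rpsProb] <;> positivity

lemma rpsProb_pos (i : Fin 6) {x y z : ℝ} (hx : 0 < x) (hy : 0 < y) (hz : 0 < z) :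
    0 < rpsProb i x y z := by
  fin_cases i <;> simp only [rpsProb] <;> positivity

lemma rpsE_M {γ₀ : ℝ} (h : 2 ≤ γ₀) (n : ℕ) {p : ℝ × ℝ × ℝ} (hp : p ∈ rpsSimplex) :
    rpsE γ₀ n rpsM p = rpsM p * (1 - 30 / rpsGamma γ₀ (n+1) ^ 2 + 56 / rpsGamma γ₀ (n+1) ^ 3) := by
  obtain ⟨h1, h2, h3, h4⟩ := hp
  have g1 := rpsGamma_ge h (n+1)
  have g2 := rpsGamma_succ γ₀ n
  obtain ⟨x, y, z⟩ := p
  simp only at h4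
  have e : z = 1 - x - y := by linarith
  simp only [rpsE, Fin.sum_univ_six, rpsProb, rpsM, rpsStep, rpsIncr, g2, e]
  field_simp
  ring

lemma rpsM_nonneg {p : ℝ × ℝ × ℝ} (hp : p ∈ rpsSimplex) : 0 ≤ rpsM p := by
  obtain ⟨h1, h2, h3, h4⟩ := hp
  unfold rpsM; positivity

lemma rpsM_le {p : ℝ × ℝ × ℝ} (hp : p ∈ rpsSimplex) : rpsM p ≤ 1 / 27 := by
  obtain ⟨h1, h2, h3, h4⟩ := hp
  obtain ⟨x, y, z⟩ := p
  simp only at h1 h2 h3 h4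
  simp only [rpsM]
  have h : 27 * (x * y * z) ≤ (x + y + z) ^ 3 := by
    nlinarith [mul_nonneg h1 (sq_nonneg (y - z)), mul_nonneg h2 (sq_nonneg (x - z)),
      mul_nonneg h3 (sq_nonneg (x - y)), mul_nonneg h1 (sq_nonneg (x - y)),
      mul_nonneg h1 (sq_nonneg (x - z)), mul_nonneg h2 (sq_nonneg (x - y)),
      mul_nonneg h2 (sq_nonneg (y - z)), mul_nonneg h3 (sq_nonneg (x - z)),
      mul_nonneg h3 (sq_nonneg (y - z))]
  rw [h4] at h
  linarith

lemma rpsE_M_le {γ₀ : ℝ} (h : 2 ≤ γ₀) (n : ℕ) {p : ℝ × ℝ × ℝ} (hp : p ∈ rpsSimplex) :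
    rpsE γ₀ n rpsM p ≤ rpsM p := by
  rw [rpsE_M h n hp]
  have g1 := rpsGamma_ge h (n+1)
  have hm := rpsM_nonneg hp
  have : 56 / rpsGamma γ₀ (n+1) ^ 3 ≤ 30 / rpsGamma γ₀ (n+1) ^ 2 := by
    rw [div_le_div_iff₀ (by positivity) (by positivity)]
    nlinarith [pow_pos (by linarith : 0 < rpsGamma γ₀ (n+1)) 2]
  nlinarith

lemma rpsStep_diff {γ₀ : ℝ} (h : 2 ≤ γ₀) (n : ℕ) (i : Fin 6) {p : ℝ × ℝ × ℝ} (hp : p ∈ rpsSimplex) :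
    (rpsM (rpsStep γ₀ n i p) - rpsM p) ^ 2 ≤ 144 / rpsGamma γ₀ (n+1) ^ 2 := by
  have hq := rpsStep_mem h n i hp
  have g1 := rpsGamma_ge h (n+1)
  have g2 := rpsGamma_succ γ₀ n
  obtain ⟨i1, i2, i3, i4⟩ := rpsIncr_mem i
  have key : ∀ x d : ℝ, 0 ≤ x → x ≤ 1 → 0 ≤ d → d ≤ 4 →
      |(rpsGamma γ₀ n * x + d) / rpsGamma γ₀ (n+1) - x| ≤ 4 / rpsGamma γ₀ (n+1) := by
    intro x d hx hx1 hd hd4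
    have : (rpsGamma γ₀ n * x + d) / rpsGamma γ₀ (n+1) - x = (d - 4 * x) / rpsGamma γ₀ (n+1) := by
      rw [g2]; field_simp; ring
    rw [this, abs_div, abs_of_pos (by linarith : 0 < rpsGamma γ₀ (n+1))]
    gcongr
    rw [abs_le]; constructor <;> linarith
  obtain ⟨h1, h2, h3, h4⟩ := hp
  obtain ⟨q1, q2, q3, q4⟩ := hq
  have k1 := key p.1 (rpsIncr i).1 h1 (by linarith) i1 (by linarith)
  have k2 := key p.2.1 (rpsIncr i).2.1 h2 (by linarith) i2 (by linarith)
  have k3 := key p.2.2 (rpsIncr i).2.2 h3 (by linarith) i3 (by linarith)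
  change |(rpsStep γ₀ n i p).1 - _| ≤ _ at k1
  change |(rpsStep γ₀ n i p).2.1 - _| ≤ _ at k2
  change |(rpsStep γ₀ n i p).2.2 - _| ≤ _ at k3
  generalize rpsStep γ₀ n i p = q at *
  obtain ⟨x, y, z⟩ := p
  obtain ⟨x', y', z'⟩ := q
  simp only [rpsM] at *
  set e := 4 / rpsGamma γ₀ (n+1) with he
  have hx : x' * y' * z' - x * y * z = (x' - x) * (y' * z') + (y' - y) * (x * z') + (z' - z) * (x * y) := by
    ring
  have e0 : 0 ≤ e := by positivity
  have m1 : |(x' - x) * (y' * z')| ≤ e * 1 := by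
    rw [abs_mul]
    refine mul_le_mul k1 ?_ (abs_nonneg _) e0
    rw [abs_of_nonneg (by positivity)]; nlinarith
  have m2 : |(y' - y) * (x * z')| ≤ e * 1 := by
    rw [abs_mul]
    refine mul_le_mul k2 ?_ (abs_nonneg _) e0
    rw [abs_of_nonneg (by positivity)]; nlinarith
  have m3 : |(z' - z) * (x * y)| ≤ e * 1 := by
    rw [abs_mul]
    refine mul_le_mul k3 ?_ (abs_nonneg _) e0
    rw [abs_of_nonneg (by positivity)]; nlinarith
  have m4 : |x' * y' * z' - x * y * z| ≤ 3 * e := by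
    rw [hx]
    refine (abs_add_three _ _ _).trans ?_
    linarith
  calc _ = |x' * y' * z' - x * y * z| ^ 2 := (sq_abs _).symm
    _ ≤ (3 * e) ^ 2 := by gcongr
    _ = _ := by rw [he]; field_simp; norm_num

lemma rpsE_sq {γ₀ : ℝ} (h : 2 ≤ γ₀) (n : ℕ) {p : ℝ × ℝ × ℝ} (hp : p ∈ rpsSimplex) {m : ℝ}
    (hm : 0 ≤ m) (hm1 : m ≤ 1) :
    rpsE γ₀ n (fun q => (rpsM q - m) ^ 2) p ≤ (rpsM p - m) ^ 2 + 300 / rpsGamma γ₀ (n+1) ^ 2 := by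
  have g1 := rpsGamma_ge h (n+1)
  have hE := rpsE_M h n hp
  have h1 := rpsE_one γ₀ n hp
  have hM := rpsM_nonneg hp
  have hM1 := rpsM_le hp
  have hq : ∑ i : Fin 6, rpsProb i p.1 p.2.1 p.2.2 * (rpsM (rpsStep γ₀ n i p) - rpsM p) ^ 2
      ≤ 144 / rpsGamma γ₀ (n+1) ^ 2 := by
    calc _ ≤ ∑ i : Fin 6, rpsProb i p.1 p.2.1 p.2.2 * (144 / rpsGamma γ₀ (n+1) ^ 2) := by
          apply Finset.sum_le_sum
          intro i _
          exact mul_le_mul_of_nonneg_left (rpsStep_diff h n i hp) (rpsProb_nonneg i hp)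
      _ = _ := by rw [← Finset.sum_mul, h1, one_mul]
  have hdec : rpsE γ₀ n (fun q => (rpsM q - m) ^ 2) p =
      (rpsM p - m) ^ 2 * (∑ i : Fin 6, rpsProb i p.1 p.2.1 p.2.2)
      + 2 * (rpsM p - m) * (rpsE γ₀ n rpsM p - rpsM p * ∑ i : Fin 6, rpsProb i p.1 p.2.1 p.2.2)
      + ∑ i : Fin 6, rpsProb i p.1 p.2.1 p.2.2 * (rpsM (rpsStep γ₀ n i p) - rpsM p) ^ 2 := by
    simp only [rpsE, Fin.sum_univ_six]; ring
  rw [hdec, h1, hE]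
  set G := rpsGamma γ₀ (n+1) with hG
  have a1 : 56 / G ^ 3 ≤ 30 / G ^ 2 := by
    rw [div_le_div_iff₀ (by positivity) (by positivity)]
    nlinarith [pow_pos (by linarith : 0 < G) 2]
  have a2 : 0 ≤ 56 / G ^ 3 := by positivity
  set r := 30 / G ^ 2 - 56 / G ^ 3 with hr
  have r0 : 0 ≤ r := by linarith
  have r1 : r ≤ 30 / G ^ 2 := by linarith
  have a3 : 2 * (rpsM p - m) * (rpsM p * (1 - 30 / G ^ 2 + 56 / G ^ 3) - rpsM p * 1) ≤ 2 * r := by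
    have : 2 * (rpsM p - m) * (rpsM p * (1 - 30 / G ^ 2 + 56 / G ^ 3) - rpsM p * 1)
      = 2 * ((m - rpsM p) * rpsM p) * r := by rw [hr]; ring
    rw [this]
    have : (m - rpsM p) * rpsM p ≤ 1 := by nlinarith
    nlinarith
  have e1 : 144 / G ^ 2 = 144 * (1 / G^2) := by ring
  have e2 : 300 / G ^ 2 = 300 * (1 / G^2) := by ring
  have e3 : 30 / G ^ 2 = 30 * (1 / G^2) := by ring
  have e4 : 0 ≤ 1 / G^2 := by positivity
  linarith

/-! ### The chain -/

namespace RPSChain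

variable {Ω : Type*} [mΩ : MeasurableSpace Ω] {μ : Measure Ω} {γ₀ : ℝ}

def S (c : RPSChain μ γ₀) (n : ℕ) (ω : Ω) : ℝ × ℝ × ℝ := (c.X n ω, c.Y n ω, c.Z n ω)

def Ev (c : RPSChain μ γ₀) (n : ℕ) (i : Fin 6) : Set Ω :=
  {ω | c.X (n+1) ω = (rpsGamma γ₀ n * c.X n ω + (rpsIncr i).1) / rpsGamma γ₀ (n+1) ∧
       c.Y (n+1) ω = (rpsGamma γ₀ n * c.Y n ω + (rpsIncr i).2.1) / rpsGamma γ₀ (n+1) ∧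
       c.Z (n+1) ω = (rpsGamma γ₀ n * c.Z n ω + (rpsIncr i).2.2) / rpsGamma γ₀ (n+1)}

lemma S_mem (c : RPSChain μ γ₀) (n : ℕ) (ω : Ω) : c.S n ω ∈ rpsSimplex :=
  ⟨c.nonneg_X n ω, c.nonneg_Y n ω, c.nonneg_Z n ω, c.sum_eq_one n ω⟩

lemma S_measF (c : RPSChain μ γ₀) (n : ℕ) : Measurable[c.F n] (c.S n) :=
  (c.adapted_X n).prodMk ((c.adapted_Y n).prodMk (c.adapted_Z n))

lemma S_meas (c : RPSChain μ γ₀) (n : ℕ) : Measurable (c.S n) :=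
  (c.S_measF n).mono (c.F.le n) le_rfl

lemma Ev_eq (c : RPSChain μ γ₀) (n : ℕ) (i : Fin 6) :
    c.Ev n i = {ω | c.S (n+1) ω = rpsStep γ₀ n i (c.S n ω)} := by
  ext ω; simp [Ev, S, rpsStep]

lemma rpsStep_cont (n : ℕ) (i : Fin 6) : Continuous (rpsStep γ₀ n i) := by
  unfold rpsStep; fun_prop

lemma Ev_meas (c : RPSChain μ γ₀) (n : ℕ) (i : Fin 6) : MeasurableSet (c.Ev n i) := by
  rw [Ev_eq]
  exact measurableSet_eq_fun (c.S_meas _) ((rpsStep_cont n i).measurable.comp (c.S_meas n))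

lemma step' (c : RPSChain μ γ₀) (n : ℕ) (i : Fin 6) :
    μ[(c.Ev n i).indicator (fun _ => (1:ℝ)) | c.F n] =ᵐ[μ]
      fun ω => rpsProb i (c.S n ω).1 (c.S n ω).2.1 (c.S n ω).2.2 := c.step n i

lemma bdd (c : RPSChain μ γ₀) {g : ℝ × ℝ × ℝ → ℝ} (hg : Continuous g) :
    ∃ C, ∀ n ω, ‖g (c.S n ω)‖ ≤ C := by
  obtain ⟨C, hC⟩ := rpsSimplex_compact.exists_bound_of_continuousOn hg.continuousOn
  exact ⟨C, fun n ω => hC _ (c.S_mem n ω)⟩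

lemma integrable_g [IsProbabilityMeasure μ] (c : RPSChain μ γ₀) {g : ℝ × ℝ × ℝ → ℝ}
    (hg : Continuous g) (n : ℕ) : Integrable (fun ω => g (c.S n ω)) μ := by
  obtain ⟨C, hC⟩ := c.bdd hg
  exact Integrable.of_bound (hg.measurable.comp (c.S_meas n)).aestronglyMeasurable C
    (Eventually.of_forall (hC n))

lemma integrable_Ev [IsProbabilityMeasure μ] (c : RPSChain μ γ₀) (n : ℕ) (i : Fin 6) :
    Integrable ((c.Ev n i).indicator (fun _ => (1:ℝ))) μ :=
  (integrable_const 1).indicator (c.Ev_meas n i)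

lemma Ev_sum_le (hγ : 2 ≤ γ₀) (c : RPSChain μ γ₀) (n : ℕ) (ω : Ω) :
    ∑ i, (c.Ev n i).indicator (fun _ => (1:ℝ)) ω ≤ 1 := by
  have g1 := rpsGamma_ge hγ (n+1)
  by_cases h : ∃ i, ω ∈ c.Ev n i
  · obtain ⟨i, hi⟩ := h
    rw [Finset.sum_eq_single i]
    · simp [hi]
    · intro j _ hj
      apply indicator_of_notMem
      intro hj'
      apply hj
      apply rpsIncr_inj
      obtain ⟨a1, a2, a3⟩ := hi
      obtain ⟨b1, b2, b3⟩ := hj'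
      have g0 : rpsGamma γ₀ (n+1) ≠ 0 := by positivity
      rw [a1, div_left_inj' g0] at b1
      rw [a2, div_left_inj' g0] at b2
      rw [a3, div_left_inj' g0] at b3
      refine Prod.ext ?_ (Prod.ext ?_ ?_) <;> linarith
    · simp
  · push Not at h
    rw [Finset.sum_eq_zero]
    · norm_num
    · intro i _; simp [h i]

lemma Ev_sum_eq [IsProbabilityMeasure μ] (hγ : 2 ≤ γ₀) (c : RPSChain μ γ₀) (n : ℕ) :
    ∀ᵐ ω ∂μ, ∑ i, (c.Ev n i).indicator (fun _ => (1:ℝ)) ω = 1 := by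
  have hI : Integrable (fun ω => ∑ i, (c.Ev n i).indicator (fun _ => (1:ℝ)) ω) μ :=
    integrable_finset_sum _ fun i _ => c.integrable_Ev n i
  have hi : ∀ i, ∫ ω, (c.Ev n i).indicator (fun _ => (1:ℝ)) ω ∂μ =
      ∫ ω, rpsProb i (c.S n ω).1 (c.S n ω).2.1 (c.S n ω).2.2 ∂μ := by
    intro i
    rw [← integral_condExp (c.F.le n)]
    exact integral_congr_ae (c.step' n i)
  have hpi : ∀ i, Integrable (fun ω => rpsProb i (c.S n ω).1 (c.S n ω).2.1 (c.S n ω).2.2) μ := by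
    intro i
    exact (integrable_condExp).congr (c.step' n i)
  have h1 : ∫ ω, ∑ i, (c.Ev n i).indicator (fun _ => (1:ℝ)) ω ∂μ = 1 := by
    rw [integral_finset_sum _ fun i _ => c.integrable_Ev n i]
    simp_rw [hi]
    rw [← integral_finset_sum _ fun i _ => hpi i]
    simp_rw [rpsE_one γ₀ n (c.S_mem n _)]
    simp
  have h0 : ∫ ω, (1 - ∑ i, (c.Ev n i).indicator (fun _ => (1:ℝ)) ω) ∂μ = 0 := by
    rw [integral_sub (integrable_const _) hI, h1]; simp
  rw [integral_eq_zero_iff_of_nonneg (fun ω => sub_nonneg.2 (c.Ev_sum_le hγ n ω))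
    ((integrable_const _).sub hI)] at h0
  filter_upwards [h0] with ω h
  simp only [Pi.zero_apply] at h
  linarith

lemma condExp_g [IsProbabilityMeasure μ] (hγ : 2 ≤ γ₀) (c : RPSChain μ γ₀)
    {g : ℝ × ℝ × ℝ → ℝ} (hg : Continuous g) (n : ℕ) :
    μ[fun ω => g (c.S (n+1) ω) | c.F n] =ᵐ[μ] fun ω => rpsE γ₀ n g (c.S n ω) := by
  have hc : ∀ i, Continuous (fun p => g (rpsStep γ₀ n i p)) :=
    fun i => hg.comp (rpsStep_cont n i)
  let f : Fin 6 → Ω → ℝ := fun i => (c.Ev n i).indicator (fun _ => (1:ℝ)) *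
    fun ω => g (rpsStep γ₀ n i (c.S n ω))
  have hsm : ∀ i, StronglyMeasurable[c.F n] (fun ω => g (rpsStep γ₀ n i (c.S n ω))) := fun i =>
    ((hc i).measurable.comp (c.S_measF n)).stronglyMeasurable
  have hfi : ∀ i, Integrable (f i) μ := by
    intro i
    obtain ⟨C, hC⟩ := c.bdd (hc i)
    exact (c.integrable_Ev n i).mul_bdd (c := C)
      ((hc i).measurable.comp (c.S_meas n)).aestronglyMeasurable (Eventually.of_forall (hC n))
  have h1 : (fun ω => g (c.S (n+1) ω)) =ᵐ[μ] ∑ i, f i := by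
    filter_upwards [c.Ev_sum_eq hγ n] with ω hω
    have : ∀ i, f i ω = (c.Ev n i).indicator (fun _ => (1:ℝ)) ω * g (c.S (n+1) ω) := by
      intro i
      simp only [f, Pi.mul_apply]
      by_cases h : ω ∈ c.Ev n i
      · have h' := h
        rw [Ev_eq] at h'
        rw [show c.S (n+1) ω = rpsStep γ₀ n i (c.S n ω) from h']
      · simp [h]
    rw [Finset.sum_apply]
    simp_rw [this]
    rw [← Finset.sum_mul, hω, one_mul]
  refine (condExp_congr_ae h1).trans ((condExp_finsetSum (fun i _ => hfi i) _).trans ?_)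
  have h2 : ∀ᵐ ω ∂μ, ∀ i, (μ[f i | c.F n]) ω =
      rpsProb i (c.S n ω).1 (c.S n ω).2.1 (c.S n ω).2.2 * g (rpsStep γ₀ n i (c.S n ω)) := by
    rw [ae_all_iff]
    intro i
    filter_upwards [condExp_mul_of_stronglyMeasurable_right (hsm i) (hfi i) (c.integrable_Ev n i),
      c.step' n i] with ω h3 h4
    rw [h3, Pi.mul_apply, h4]
  filter_upwards [h2] with ω h
  rw [Finset.sum_apply]
  simp_rw [h]
  rfl

lemma superm [IsProbabilityMeasure μ] (hγ : 2 ≤ γ₀) (c : RPSChain μ γ₀) :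
    Supermartingale (fun n ω => rpsM (c.S n ω)) c.F μ := by
  apply supermartingale_nat
  · intro n
    exact (rpsM_cont.measurable.comp (c.S_measF n)).stronglyMeasurable
  · exact fun n => c.integrable_g rpsM_cont n
  · intro n
    filter_upwards [c.condExp_g hγ rpsM_cont n] with ω h
    rw [h]
    exact rpsE_M_le hγ n (c.S_mem n ω)

lemma conv [IsProbabilityMeasure μ] (hγ : 2 ≤ γ₀) (c : RPSChain μ γ₀) :
    ∃ L : Ω → ℝ, ∀ᵐ ω ∂μ, Tendsto (fun n => rpsM (c.S n ω)) atTop (𝓝 (L ω)) := by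
  have hs := (c.superm hγ).neg
  refine ⟨fun ω => limUnder atTop (fun n => rpsM (c.S n ω)), ?_⟩
  have hb : ∀ n, eLpNorm ((-(fun n ω => rpsM (c.S n ω)) : ℕ → Ω → ℝ) n) 1 μ ≤ (1 : NNReal) := by
    intro n
    refine (eLpNorm_le_of_ae_bound (C := 1) (Eventually.of_forall fun ω => ?_)).trans ?_
    · simp only [Pi.neg_apply, norm_neg, Real.norm_eq_abs]
      rw [abs_of_nonneg (rpsM_nonneg (c.S_mem n ω))]
      linarith [rpsM_le (c.S_mem n ω)]
    · simp
  filter_upwards [hs.exists_ae_tendsto_of_bdd hb] with ω h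
  obtain ⟨l, hl⟩ := h
  exact tendsto_nhds_limUnder ⟨-l, by simpa using hl.neg⟩

lemma second [IsProbabilityMeasure μ] (hγ : 2 ≤ γ₀) (c : RPSChain μ γ₀) (p : ℝ × ℝ × ℝ)
    (n : ℕ) (hp : 0 ≤ rpsM p) (hp1 : rpsM p ≤ 1) (k : ℕ) :
    ∫ ω in {ω | c.S n ω = p}, (rpsM (c.S (n+k) ω) - rpsM p) ^ 2 ∂μ ≤
      75 * (1 / rpsGamma γ₀ n - 1 / rpsGamma γ₀ (n+k)) * μ.real {ω | c.S n ω = p} := by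
  set A := {ω | c.S n ω = p} with hA
  have hAm : MeasurableSet[c.F n] A := c.S_measF n (measurableSet_singleton p)
  have hcont : Continuous (fun q => (rpsM q - rpsM p) ^ 2) := by
    have := rpsM_cont; fun_prop
  induction k with
  | zero =>
    rw [setIntegral_congr_fun (g := fun _ => (0:ℝ)) (c.F.le n _ hAm)]
    · simp
    · intro ω hω
      have : c.S n ω = p := hω
      simp [this]
  | succ k ih =>
    have hAm' : MeasurableSet[c.F (n+k)] A := c.F.mono (Nat.le_add_right n k) _ hAm
    have g0 := rpsGamma_ge hγ (n+k)
    have g1 := rpsGamma_ge hγ (n+k+1)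
    have g2 := rpsGamma_succ γ₀ (n+k)
    rw [← add_assoc, ← setIntegral_condExp (c.F.le (n+k)) (c.integrable_g hcont (n+k+1)) hAm']
    have hint := (c.integrable_g hcont (n+k)).integrableOn (s := A)
    have hK : IntegrableOn (fun _ : Ω => 300 / rpsGamma γ₀ (n+k+1) ^ 2) A μ :=
      (integrable_const _).integrableOn
    calc _ ≤ ∫ ω in A, ((rpsM (c.S (n+k) ω) - rpsM p) ^ 2 + 300 / rpsGamma γ₀ (n+k+1) ^ 2) ∂μ := by
          refine setIntegral_mono_ae integrable_condExp.integrableOn (hint.add hK) ?_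
          filter_upwards [c.condExp_g hγ hcont (n+k)] with ω h
          rw [h]
          exact rpsE_sq hγ (n+k) (c.S_mem _ ω) hp hp1
      _ = ∫ ω in A, (rpsM (c.S (n+k) ω) - rpsM p) ^ 2 ∂μ
          + μ.real A * (300 / rpsGamma γ₀ (n+k+1) ^ 2) := by
          rw [integral_add hint hK]; simp
      _ ≤ 75 * (1 / rpsGamma γ₀ n - 1 / rpsGamma γ₀ (n+k)) * μ.real A
          + μ.real A * (75 * (1 / rpsGamma γ₀ (n+k) - 1 / rpsGamma γ₀ (n+k+1))) := by
          refine add_le_add ih (mul_le_mul_of_nonneg_left ?_ measureReal_nonneg)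
          have : 1 / rpsGamma γ₀ (n+k) - 1 / rpsGamma γ₀ (n+k+1)
            = 4 / (rpsGamma γ₀ (n+k) * rpsGamma γ₀ (n+k+1)) := by
            field_simp; linarith
          rw [this, ← mul_div_assoc, div_le_div_iff₀ (by positivity) (by positivity), sq]
          have : rpsGamma γ₀ (n+k) ≤ rpsGamma γ₀ (n+k+1) := by linarith
          have := mul_le_mul_of_nonneg_right this (by linarith : 0 ≤ rpsGamma γ₀ (n+k+1))
          linarith
      _ = _ := by ring

def Rch (c : RPSChain μ γ₀) (n : ℕ) (a b d : ℝ) : Prop :=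
  0 < μ {ω | c.S n ω = (a / rpsGamma γ₀ n, b / rpsGamma γ₀ n, d / rpsGamma γ₀ n)}

lemma Rch_step [IsProbabilityMeasure μ] (hγ : 2 ≤ γ₀) (c : RPSChain μ γ₀) (n : ℕ) {a b d : ℝ}
    (ha : 0 < a) (hb : 0 < b) (hd : 0 < d) (h : c.Rch n a b d) (i : Fin 6) :
    c.Rch (n+1) (a + (rpsIncr i).1) (b + (rpsIncr i).2.1) (d + (rpsIncr i).2.2) := by
  have g0 := rpsGamma_ge hγ n
  unfold Rch at *
  set p : ℝ × ℝ × ℝ := (a / rpsGamma γ₀ n, b / rpsGamma γ₀ n, d / rpsGamma γ₀ n) with hp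
  set A := {ω | c.S n ω = p} with hA
  have hAm : MeasurableSet[c.F n] A := c.S_measF n (measurableSet_singleton p)
  have hpos : 0 < rpsProb i p.1 p.2.1 p.2.2 := by
    apply rpsProb_pos <;> simp only [hp] <;> positivity
  have e1 : ∫ ω in A, (c.Ev n i).indicator (fun _ => (1:ℝ)) ω ∂μ
      = μ.real A * rpsProb i p.1 p.2.1 p.2.2 := by
    rw [← setIntegral_condExp (c.F.le n) (c.integrable_Ev n i) hAm,
      setIntegral_congr_ae (g := fun _ => rpsProb i p.1 p.2.1 p.2.2) (c.F.le n _ hAm)]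
    · simp
    · filter_upwards [c.step' n i] with ω h hω
      rw [h, show c.S n ω = p from hω]
  have e2 : ∫ ω in A, (c.Ev n i).indicator (fun _ => (1:ℝ)) ω ∂μ = μ.real (A ∩ c.Ev n i) := by
    rw [setIntegral_indicator (c.Ev_meas n i)]; simp
  have hA' : 0 < μ.real A := ENNReal.toReal_pos h.ne' (measure_ne_top _ _)
  have e3 : 0 < μ.real (A ∩ c.Ev n i) := by
    rw [← e2, e1]; positivity
  have e4 : 0 < μ (A ∩ c.Ev n i) := (ENNReal.toReal_pos_iff.1 e3).1
  refine e4.trans_le (measure_mono ?_)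
  rintro ω ⟨h1, h2⟩
  rw [Ev_eq] at h2
  have h1' : c.S n ω = p := h1
  have h2' : c.S (n+1) ω = rpsStep γ₀ n i (c.S n ω) := h2
  show c.S (n+1) ω = _
  rw [h2', h1', hp]
  simp only [rpsStep]
  have : ∀ x : ℝ, rpsGamma γ₀ n * (x / rpsGamma γ₀ n) = x := fun x => by field_simp
  simp only [this]

lemma Rch_all [IsProbabilityMeasure μ] (hγ : 2 ≤ γ₀) (c : RPSChain μ γ₀) :
    ∃ u v w : ℝ, 0 < u ∧ 0 < v ∧ 0 < w ∧ ∀ i j k : ℕ,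
      c.Rch (i + j + k) (u + 4 * i) (v + 4 * j) (w + 4 * k) := by
  obtain ⟨ω₀⟩ : Nonempty Ω := nonempty_of_isProbabilityMeasure μ
  have g0 := rpsGamma_ge hγ 0
  have hx := c.init_X_pos ω₀
  have hy := c.init_Y_pos ω₀
  have hz := c.init_Z_pos ω₀
  refine ⟨rpsGamma γ₀ 0 * c.X 0 ω₀, rpsGamma γ₀ 0 * c.Y 0 ω₀, rpsGamma γ₀ 0 * c.Z 0 ω₀,
    by positivity, by positivity, by positivity, ?_⟩
  intro i j k
  induction k with
  | succ k ih =>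
    have := c.Rch_step hγ _ (by positivity) (by positivity) (by positivity) ih 2
    simp only [rpsIncr] at this
    convert this using 1 <;> push_cast <;> ring
  | zero =>
  induction j with
  | succ j ih =>
    have := c.Rch_step hγ _ (by positivity) (by positivity) (by simpa using by positivity) ih 1
    simp only [rpsIncr] at this
    convert this using 1 <;> push_cast <;> ring
  | zero =>
  induction i with
  | succ i ih =>
    have := c.Rch_step hγ _ (by positivity) (by simpa using by positivity) (by simpa using by positivity) ih 0
    simp only [rpsIncr] at this
    convert this using 1 <;> push_cast <;> ring
  | zero =>
    unfold Rch
    have : {ω | c.S (0+0+0) ω = ((rpsGamma γ₀ 0 * c.X 0 ω₀ + 4 * ((0:ℕ):ℝ)) / rpsGamma γ₀ (0+0+0),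
      (rpsGamma γ₀ 0 * c.Y 0 ω₀ + 4 * ((0:ℕ):ℝ)) / rpsGamma γ₀ (0+0+0),
      (rpsGamma γ₀ 0 * c.Z 0 ω₀ + 4 * ((0:ℕ):ℝ)) / rpsGamma γ₀ (0+0+0))} = univ := by
      ext ω
      simp only [mem_setOf_eq, mem_univ, iff_true, S, add_zero, Nat.cast_zero, mul_zero]
      rw [mul_div_cancel_left₀ _ (by positivity), mul_div_cancel_left₀ _ (by positivity),
        mul_div_cancel_left₀ _ (by positivity), c.init_X_const ω ω₀, c.init_Y_const ω ω₀,
        c.init_Z_const ω ω₀]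
    rw [this]; simp

/-- Every value of `(0,1/27)` is approximated by reachable states. -/
lemma approx [IsProbabilityMeasure μ] (hγ : 2 ≤ γ₀) (c : RPSChain μ γ₀) {m : ℝ} (hm : 0 < m)
    (hm1 : m < 1 / 27) : ∃ p : ℕ → ℝ × ℝ × ℝ, (∀ n, 0 < μ {ω | c.S n ω = p n}) ∧
      Tendsto (fun n => rpsM (p n)) atTop (𝓝 m) := by
  obtain ⟨u, v, w, hu, hv, hw, hR⟩ := c.Rch_all hγ
  obtain ⟨t, ⟨ht0, ht1⟩, ht⟩ : ∃ t ∈ Icc (0:ℝ) (1/3), t * t * (1 - 2 * t) = m := by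
    have := intermediate_value_Icc (a := (0:ℝ)) (b := 1/3) (f := fun t => t * t * (1 - 2 * t))
      (by norm_num) (by fun_prop)
    apply this
    constructor <;> norm_num <;> linarith
  let q : ℕ → ℕ := fun n => ⌊t * (n:ℝ)⌋₊
  have hq : ∀ n, 2 * q n ≤ n := by
    intro n
    have h1 : ((q n : ℕ) : ℝ) ≤ t * n := Nat.floor_le (by positivity)
    have h2 : (2 * (q n : ℕ) : ℝ) ≤ n := by
      have : (0:ℝ) ≤ n := n.cast_nonneg
      nlinarith
    exact_mod_cast h2
  refine ⟨fun n => ((u + 4 * q n) / rpsGamma γ₀ n, (v + 4 * q n) / rpsGamma γ₀ n,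
    (w + 4 * ((n:ℝ) - 2 * q n)) / rpsGamma γ₀ n), ?_, ?_⟩
  · intro n
    have := hR (q n) (q n) (n - 2 * q n)
    have e : q n + q n + (n - 2 * q n) = n := by have := hq n; omega
    rw [e, Nat.cast_sub (hq n)] at this
    push_cast at this
    exact this
  · have hn : Tendsto (fun n : ℕ => (n:ℝ)) atTop atTop := tendsto_natCast_atTop_atTop
    have hqt : Tendsto (fun n : ℕ => (q n : ℝ) / n) atTop (𝓝 t) :=
      (tendsto_nat_floor_mul_div_atTop ht0).comp hn
    have hc : ∀ s : ℝ, Tendsto (fun n : ℕ => s / (n:ℝ)) atTop (𝓝 0) := fun s =>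
      tendsto_const_nhds.div_atTop hn
    have main : ∀ (s l : ℝ) (f : ℕ → ℝ), Tendsto (fun n => f n / n) atTop (𝓝 l) →
        Tendsto (fun n => (s + 4 * f n) / rpsGamma γ₀ n) atTop (𝓝 l) := by
      intro s l f hf
      have h1 := ((hc s).add (hf.const_mul 4)).div ((hc γ₀).add_const 4) (by norm_num)
      have e : (0 + 4 * l) / (0 + 4) = l := by ring
      rw [e] at h1
      refine h1.congr' ?_
      filter_upwards [eventually_gt_atTop 0] with n hn0
      have : (0:ℝ) < n := by exact_mod_cast hn0
      have h0 : 0 < γ₀ + 4 * n := by positivity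
      have h0' : 0 < γ₀ / n + 4 := by positivity
      simp only [rpsGamma, Pi.div_apply]
      field_simp
    have k3 : Tendsto (fun n : ℕ => ((n:ℝ) - 2 * q n) / n) atTop (𝓝 (1 - 2 * t)) := by
      refine ((hqt.const_mul 2).const_sub 1).congr' ?_
      filter_upwards [eventually_gt_atTop 0] with n hn0
      have : (0:ℝ) < n := by exact_mod_cast hn0
      field_simp
    rw [← ht]
    exact ((main u t _ hqt).mul (main v t _ hqt)).mul (main w _ _ k3)

end RPSChain

/-- Almost surely `M_n = X_n Y_n Z_n` converges to a limit `M ∈ [0, 1/27]`, and the law of `M`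
gives positive probability to every nonempty open subinterval of `(0, 1/27)`. -/
theorem rps_M_converges_full_support
    {Ω : Type*} [MeasurableSpace Ω] (μ : Measure Ω) [IsProbabilityMeasure μ]
    (γ₀ : ℝ) (hγ₀ : 2 ≤ γ₀) (c : RPSChain μ γ₀) :
    (∀ᵐ ω ∂μ, ∃ M : ℝ, M ∈ Set.Icc (0 : ℝ) (1/27) ∧
      Tendsto (fun n => c.X n ω * c.Y n ω * c.Z n ω) atTop (𝓝 M)) ∧
    (∀ a b : ℝ, 0 ≤ a → a < b → b ≤ 1/27 →
      0 < μ {ω | ∃ M ∈ Set.Ioo a b,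
        Tendsto (fun n => c.X n ω * c.Y n ω * c.Z n ω) atTop (𝓝 M)}) := by
  obtain ⟨L, hL⟩ := c.conv hγ₀
  constructor
  · filter_upwards [hL] with ω h
    refine ⟨L ω, ⟨?_, ?_⟩, h⟩
    · exact ge_of_tendsto' h fun n => rpsM_nonneg (c.S_mem n ω)
    · exact le_of_tendsto' h fun n => rpsM_le (c.S_mem n ω)
  · intro a b ha hab hb
    by_contra hcon
    have hT := le_antisymm (not_lt.1 hcon) zero_le
    obtain ⟨p, hp, hpt⟩ := c.approx hγ₀ (m := (a + b) / 2) (by linarith) (by linarith)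
    set ε := (b - a) / 4 with hε
    have hε0 : 0 < ε := by linarith
    have hg : Tendsto (fun n => 75 / rpsGamma γ₀ n) atTop (𝓝 0) := by
      refine tendsto_const_nhds.div_atTop ?_
      unfold rpsGamma
      exact tendsto_atTop_add_const_left _ _
        (tendsto_natCast_atTop_atTop.const_mul_atTop (by norm_num))
    obtain ⟨n, h1, h2⟩ := ((hpt.eventually (Metric.ball_mem_nhds _ hε0)).and
      (hg.eventually_lt_const (pow_pos hε0 2))).exists
    have hA0 := hp n
    set P := p n with hP
    rw [Real.dist_eq, abs_lt] at h1
    set A := {ω | c.S n ω = P} with hA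
    have hAm : MeasurableSet A := c.S_meas n (measurableSet_singleton P)
    have hA' : 0 < μ.real A := ENNReal.toReal_pos hA0.ne' (measure_ne_top _ _)
    have hcont : Continuous (fun q => (rpsM q - rpsM P) ^ 2) := by
      have := rpsM_cont; fun_prop
    obtain ⟨C, hC⟩ := c.bdd hcont
    have hlim : Tendsto (fun k => ∫ ω in A, (rpsM (c.S (n+k) ω) - rpsM P) ^ 2 ∂μ) atTop
        (𝓝 (∫ ω in A, (L ω - rpsM P) ^ 2 ∂μ)) := by
      refine tendsto_integral_of_dominated_convergence (fun _ => C) ?_ ?_ ?_ ?_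
      · exact fun k => (c.integrable_g hcont (n+k)).aestronglyMeasurable.restrict
      · exact integrable_const _
      · exact fun k => Eventually.of_forall fun ω => hC (n+k) ω
      · filter_upwards [ae_restrict_of_ae hL] with ω h
        have h' : Tendsto (fun k => rpsM (c.S (n+k) ω)) atTop (𝓝 (L ω)) := by
          have := (tendsto_add_atTop_iff_nat n).2 h
          simpa [add_comm] using this
        exact (h'.sub_const _).pow 2
    have hle : ∫ ω in A, (L ω - rpsM P) ^ 2 ∂μ ≤ 75 / rpsGamma γ₀ n * μ.real A := by
      refine le_of_tendsto' hlim fun k => ?_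
      have g1 := rpsGamma_ge hγ₀ (n+k)
      refine (c.second hγ₀ P n (by linarith) (by linarith) k).trans ?_
      refine mul_le_mul_of_nonneg_right ?_ measureReal_nonneg
      have : 0 ≤ 75 * (1 / rpsGamma γ₀ (n+k)) := by positivity
      rw [mul_sub, mul_one_div]; linarith
    have hLm : AEStronglyMeasurable L μ :=
      aestronglyMeasurable_of_tendsto_ae atTop
        (fun n => (c.integrable_g rpsM_cont n).aestronglyMeasurable) hL
    have hLb : ∀ᵐ ω ∂μ, 0 ≤ L ω ∧ L ω ≤ 1/27 := by
      filter_upwards [hL] with ω h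
      exact ⟨ge_of_tendsto' h fun n => rpsM_nonneg (c.S_mem n ω),
        le_of_tendsto' h fun n => rpsM_le (c.S_mem n ω)⟩
    have hint : Integrable (fun ω => (L ω - rpsM P) ^ 2) μ := by
      refine Integrable.of_bound ((hLm.sub aestronglyMeasurable_const).pow 2) 1 ?_
      filter_upwards [hLb] with ω h
      rw [Real.norm_eq_abs, abs_of_nonneg (sq_nonneg _)]
      nlinarith
    have hge : ε ^ 2 * μ.real A ≤ ∫ ω in A, (L ω - rpsM P) ^ 2 ∂μ := by
      have : ε ^ 2 * μ.real A = ∫ ω in A, ε ^ 2 ∂μ := by simp [mul_comm]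
      rw [this]
      refine setIntegral_mono_ae (integrable_const _).integrableOn hint.integrableOn ?_
      have hT' : ∀ᵐ ω ∂μ, ¬ ∃ M ∈ Set.Ioo a b,
        Tendsto (fun n => c.X n ω * c.Y n ω * c.Z n ω) atTop (𝓝 M) := by
        rw [ae_iff]; simpa [and_assoc] using hT
      filter_upwards [hT', hL] with ω h3 h4
      have h5 : ¬ L ω ∈ Ioo a b := fun h => h3 ⟨L ω, h, h4⟩
      by_cases h6 : a < L ω
      · have h7 : b ≤ L ω := by
          by_contra h8; exact h5 ⟨h6, not_le.1 h8⟩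
        have : ε ≤ L ω - rpsM P := by linarith
        nlinarith
      · have : ε ≤ rpsM P - L ω := by linarith
        nlinarith
    have := mul_lt_mul_of_pos_right h2 hA'
    linarith
end
end

section
/- Almost surely, limsup_{n→∞} M_n < 1/27; in particular, on the almost sure event where M_n converges, the limit M = lim_{n→∞} M_n satisfies M < 1/27. -/
open MeasureTheory ProbabilityTheory Filter Set Topology

noncomputable section

/-- next state, first coordinate etc. -/
def nxX (s : ℝ) (i : Fin 6) (x : ℝ) : ℝ := ((s - 4) * x + (rpsIncr i).1) / s
def nxY (s : ℝ) (i : Fin 6) (x : ℝ) : ℝ := ((s - 4) * x + (rpsIncr i).2.1) / s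
def nxZ (s : ℝ) (i : Fin 6) (x : ℝ) : ℝ := ((s - 4) * x + (rpsIncr i).2.2) / s

lemma prob_nonneg (i : Fin 6) {x y z : ℝ} (hx : 0 ≤ x) (hy : 0 ≤ y) (hz : 0 ≤ z) :
    0 ≤ rpsProb i x y z := by
  fin_cases i <;> simp only [rpsProb] <;> positivity

lemma prob_sum {x y z : ℝ} (h : x + y + z = 1) : ∑ i, rpsProb i x y z = 1 := by
  have : z = 1 - x - y := by linarith
  subst this
  simp [Fin.sum_univ_six, rpsProb]; ring

lemma det_mean (s : ℝ) (hs : 6 ≤ s) {x y z : ℝ} (h : x + y + z = 1) :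
    ∑ i, rpsProb i x y z * (nxX s i x * nxY s i y * nxZ s i z)
      = x * y * z * (1 - (30 * s - 56) / s ^ 3) := by
  have : z = 1 - x - y := by linarith
  subst this
  have : s ≠ 0 := by linarith
  simp only [Fin.sum_univ_six, rpsProb, nxX, nxY, nxZ, rpsIncr]
  field_simp
  ring

lemma amgm {x y z : ℝ} (hx : 0 ≤ x) (hy : 0 ≤ y) (hz : 0 ≤ z) (h : x + y + z = 1) :
    x * y * z ≤ 1 / 27 := by
  have : z = 1 - x - y := by linarith
  subst this
  nlinarith [mul_nonneg hx (sq_nonneg (y - (1 - x - y))), mul_nonneg hy (sq_nonneg (x - (1 - x - y))),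
    mul_nonneg hz (sq_nonneg (x - y)), sq_nonneg (x - y), sq_nonneg (x - (1 - x - y)), sq_nonneg (y - (1 - x - y))]

lemma grad {x y z : ℝ} (hx : 0 ≤ x) (hy : 0 ≤ y) (hz : 0 ≤ z) (h : x + y + z = 1) :
    (y * z - 1/9) ^ 2 + (x * z - 1/9) ^ 2 + (x * y - 1/9) ^ 2 ≤ 2 * (1/27 - x * y * z) := by
  have e0 : 0 ≤ x * y + y * z + x * z := by positivity
  have e1 : x * y + y * z + x * z ≤ 1/3 := by
    nlinarith [sq_nonneg (x - y), sq_nonneg (x - z), sq_nonneg (y - z), congrArg (· ^ 2) h]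
  have e2 : (y * z) ^ 2 + (x * z) ^ 2 + (x * y) ^ 2
      = (x * y + y * z + x * z) ^ 2 - 2 * (x * y * z) := by
    have : z = 1 - x - y := by linarith
    subst this; ring
  nlinarith [mul_nonneg e0 (sub_nonneg.2 e1)]

lemma sq_of_abs {a k : ℝ} (h : |a| ≤ k) : a ^ 2 ≤ k ^ 2 := by
  rw [← sq_abs]; gcongr

lemma mul16 {a b : ℝ} (ha : |a| ≤ 4) (hb : |b| ≤ 4) : |a * b| ≤ 16 := by
  rw [abs_mul]; nlinarith [abs_nonneg a, abs_nonneg b]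

lemma cs3 (a b d u v w : ℝ) :
    (a * u + b * v + d * w) ^ 2 ≤ (a^2+b^2+d^2) * (u^2+v^2+w^2) := by
  nlinarith [sq_nonneg (a*v-b*u), sq_nonneg (a*w-d*u), sq_nonneg (b*w-d*v)]

lemma comb3 {a b d e x y z : ℝ} (hx : 0 ≤ x) (hy : 0 ≤ y) (hz : 0 ≤ z)
    (h : x + y + z = 1) (ha : |a| ≤ 16) (hb : |b| ≤ 16) (hd : |d| ≤ 16) (he : |e| ≤ 11) :
    |a * z + b * y + d * x + e| ≤ 27 := by
  rw [abs_le] at *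
  have h1 := mul_le_mul_of_nonneg_right ha.1 hz
  have h2 := mul_le_mul_of_nonneg_right ha.2 hz
  have h3 := mul_le_mul_of_nonneg_right hb.1 hy
  have h4 := mul_le_mul_of_nonneg_right hb.2 hy
  have h5 := mul_le_mul_of_nonneg_right hd.1 hx
  have h6 := mul_le_mul_of_nonneg_right hd.2 hx
  constructor <;> linarith [he.1, he.2]

lemma fin_alg {W M q r : ℝ} (hW : 0 ≤ W) (hr0 : 0 < r) (hr6 : r ≤ 1/6) (b2 : M * q ≤ 2 * r^2) :
    ((W + 25*r)^2 + 2 * (W + 25*r) * M + (192 * W + 1458 * r ^ 2) * r ^ 2)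
        - 2 * (W + 25*r) * (M * (1 - q)) ≤ (W + 25 * (r + 4 * r^2))^2 := by
  have hA : 0 ≤ W + 25 * r := by positivity
  have b3 := mul_le_mul_of_nonneg_left b2 hA
  have b4 : 0 ≤ W * r^2 := by positivity
  have b6 : 0 < r^3 := by positivity
  have b5 : r^4 ≤ 1/6 * r^3 := by
    have := mul_le_mul_of_nonneg_right hr6 b6.le
    linarith
  have b7 : 0 ≤ r^4 := by positivity
  linarith

/-- The squared increment is controlled. -/
lemma incr_sq (s : ℝ) (hs : 6 ≤ s) {x y z a b d : ℝ} (hx : 0 ≤ x) (hy : 0 ≤ y) (hz : 0 ≤ z)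
    (h : x + y + z = 1) (ha : |a| ≤ 4) (hb : |b| ≤ 4) (hd : |d| ≤ 4) (habd : a + b + d = 0) :
    ((x + a / s) * (y + b / s) * (z + d / s) - x * y * z) ^ 2
      ≤ (192 * (1/27 - x * y * z) + 1458 / s ^ 2) / s ^ 2 := by
  have hs0 : 0 < s := by linarith
  set P := a * (y * z - 1/9) + b * (x * z - 1/9) + d * (x * y - 1/9) with hP
  set Q := (a * b) * z + (a * d) * y + (b * d) * x + a * b * d / s with hQ
  have e : (x + a / s) * (y + b / s) * (z + d / s) - x * y * z = (P + Q / s) / s := by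
    have : d = - a - b := by linarith
    rw [hP, hQ]; subst this; field_simp; ring
  have hab := mul16 ha hb
  have had := mul16 ha hd
  have hbd := mul16 hb hd
  have habd3 : |a * b * d / s| ≤ 11 := by
    rw [abs_div, abs_mul, abs_of_pos hs0, div_le_iff₀ hs0]
    nlinarith [abs_nonneg (a * b), abs_nonneg d]
  have hQ' : |Q| ≤ 27 := comb3 hx hy hz h hab had hbd habd3
  have hQ2 : Q ^ 2 ≤ 729 := (sq_of_abs hQ').trans (by norm_num)
  have g := grad hx hy hz h
  have ha2 := sq_of_abs ha
  have hb2 := sq_of_abs hb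
  have hd2 := sq_of_abs hd
  have hP2 : P ^ 2 ≤ 96 * (1/27 - x * y * z) := by
    refine (cs3 a b d _ _ _).trans ?_
    calc _ ≤ 48 * (2 * (1/27 - x * y * z)) :=
          mul_le_mul (by linarith) g (by positivity) (by norm_num)
      _ = _ := by ring
  rw [e, div_pow]
  apply div_le_div_of_nonneg_right _ (by positivity)
  have h2 : (Q / s) ^ 2 ≤ 729 / s ^ 2 := by
    rw [div_pow]; exact div_le_div_of_nonneg_right hQ2 (by positivity)
  have h3 : (1458 : ℝ) / s ^ 2 = 2 * (729 / s ^ 2) := by ring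
  linarith [sq_nonneg (P - Q / s)]

lemma det_T (s : ℝ) (hs : 6 ≤ s) {x y z : ℝ} (hx : 0 ≤ x) (hy : 0 ≤ y) (hz : 0 ≤ z)
    (h : x + y + z = 1) :
    1/27 - (1 - 1/(s-4)) * (x * y * z) ≤ ∑ i, rpsProb i x y z *
      (1/27 - (1 - 1/s) * (nxX s i x * nxY s i y * nxZ s i z)) := by
  have e : ∑ i, rpsProb i x y z * (1/27 - (1 - 1/s) * (nxX s i x * nxY s i y * nxZ s i z))
      = 1/27 * ∑ i, rpsProb i x y z - (1 - 1/s) *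
        ∑ i, rpsProb i x y z * (nxX s i x * nxY s i y * nxZ s i z) := by
    rw [Finset.mul_sum, Finset.mul_sum, ← Finset.sum_sub_distrib]
    exact Finset.sum_congr rfl fun i _ => by ring
  rw [e, prob_sum h, det_mean s hs h]
  have hM : 0 ≤ x * y * z := by positivity
  have key : (1 - 1/s) * (1 - (30 * s - 56) / s ^ 3) ≤ 1 - 1/(s-4) := by
    obtain ⟨t, rfl⟩ : ∃ t, s = t + 6 := ⟨s - 6, by ring⟩
    have ht : 0 ≤ t := by linarith
    have h4 : t + 6 - 4 = t + 2 := by ring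
    rw [h4, ← sub_nonneg]
    have : 1 - 1 / (t + 2) - (1 - 1 / (t + 6)) * (1 - (30 * (t + 6) - 56) / (t + 6) ^ 3)
        = ((t+5) * (30*t+124) * (t+2) - 4 * (t+6)^3) / ((t+2) * (t+6)^4) := by
      field_simp; ring
    rw [this]
    apply div_nonneg _ (by positivity)
    ring_nf; positivity
  nlinarith [mul_le_mul_of_nonneg_left key hM]

lemma det_U (s : ℝ) (hs : 6 ≤ s) {x y z : ℝ} (hx : 0 ≤ x) (hy : 0 ≤ y) (hz : 0 ≤ z)
    (h : x + y + z = 1) :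
    ∑ i, rpsProb i x y z * (1/27 - nxX s i x * nxY s i y * nxZ s i z + 25 / s) ^ 2
      ≤ (1/27 - x * y * z + 25 / (s-4)) ^ 2 := by
  have hs0 : 0 < s := by linarith
  have hM : 0 ≤ x * y * z := by positivity
  have hM' := amgm hx hy hz h
  set M := x * y * z with hMdef
  set W := 1/27 - M with hW
  have hW0 : 0 ≤ W := by linarith
  have step : ∀ i, (1/27 - nxX s i x * nxY s i y * nxZ s i z + 25 / s) ^ 2
      ≤ (W + 25/s)^2 + 2 * (W + 25/s) * (M - nxX s i x * nxY s i y * nxZ s i z)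
        + (192 * W + 1458 / s ^ 2) / s ^ 2 := by
    intro i
    have hx1 : x ≤ 1 := by linarith
    have hy1 : y ≤ 1 := by linarith
    have hz1 : z ≤ 1 := by linarith
    have := incr_sq s hs (a := (rpsIncr i).1 - 4 * x) (b := (rpsIncr i).2.1 - 4 * y)
      (d := (rpsIncr i).2.2 - 4 * z) hx hy hz h
      (by rw [abs_le]; fin_cases i <;> simp only [rpsIncr] <;> constructor <;> linarith)
      (by rw [abs_le]; fin_cases i <;> simp only [rpsIncr] <;> constructor <;> linarith)
      (by rw [abs_le]; fin_cases i <;> simp only [rpsIncr] <;> constructor <;> linarith)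
      (by fin_cases i <;> simp only [rpsIncr] <;> linarith)
    have eX : nxX s i x = x + ((rpsIncr i).1 - 4 * x) / s := by
      unfold nxX; field_simp; ring
    have eY : nxY s i y = y + ((rpsIncr i).2.1 - 4 * y) / s := by
      unfold nxY; field_simp; ring
    have eZ : nxZ s i z = z + ((rpsIncr i).2.2 - 4 * z) / s := by
      unfold nxZ; field_simp; ring
    rw [← eX, ← eY, ← eZ, ← hMdef, ← hW] at this
    generalize nxX s i x * nxY s i y * nxZ s i z = N at *
    have e1 : (1/27 - N + 25 / s) = (W + 25/s) + (M - N) := by rw [hW]; ring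
    rw [e1]; linarith
  have hsum : ∑ i, rpsProb i x y z * (1/27 - nxX s i x * nxY s i y * nxZ s i z + 25 / s) ^ 2
      ≤ ((W + 25/s)^2 + 2 * (W + 25/s) * M + (192 * W + 1458 / s ^ 2) / s ^ 2)
        - 2 * (W + 25/s) * (M * (1 - (30 * s - 56) / s ^ 3)) := by
    rw [← det_mean s hs h]
    calc _ ≤ ∑ i, rpsProb i x y z * ((W + 25/s)^2
          + 2 * (W + 25/s) * (M - nxX s i x * nxY s i y * nxZ s i z)
          + (192 * W + 1458 / s ^ 2) / s ^ 2) :=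
        Finset.sum_le_sum fun i _ => mul_le_mul_of_nonneg_left (step i) (prob_nonneg i hx hy hz)
      _ = ((W + 25/s)^2 + 2 * (W + 25/s) * M + (192 * W + 1458 / s ^ 2) / s ^ 2)
            * ∑ i, rpsProb i x y z
          - 2 * (W + 25/s) * ∑ i, rpsProb i x y z * (nxX s i x * nxY s i y * nxZ s i z) := by
        rw [Finset.mul_sum, Finset.mul_sum, ← Finset.sum_sub_distrib]
        exact Finset.sum_congr rfl fun i _ => by ring
      _ = _ := by rw [prob_sum h, mul_one]
  refine hsum.trans ?_
  set r := 1 / s with hr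
  have hr0 : 0 < r := by positivity
  have hr6 : r ≤ 1/6 := by rw [hr]; exact one_div_le_one_div_of_le (by norm_num) hs
  have hrr : 1/(s-4) ≥ r + 4 * r^2 := by
    have h4 : 0 < s - 4 := by linarith
    rw [hr, ge_iff_le, le_div_iff₀ h4]; field_simp; nlinarith
  have e25 : 25 / (s-4) = 25 * (1/(s-4)) := by ring
  have e25' : 25 / s = 25 * r := by rw [hr]; ring
  have e14 : (192 * W + 1458 / s ^ 2) / s ^ 2 = (192 * W + 1458 * r^2) * r^2 := by rw [hr]; field_simp
  have e30 : (30 * s - 56) / s ^ 3 ≤ 30 * r ^ 2 := by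
    rw [hr, div_le_iff₀ (by positivity)]; field_simp; linarith
  rw [e25, e25', e14]
  have b1 : (W + 25 * (r + 4 * r^2))^2 ≤ (W + 25 * (1/(s-4)))^2 := by gcongr
  refine le_trans ?_ b1
  have b2 : M * ((30 * s - 56) / s ^ 3) ≤ 2 * r^2 := by
    calc _ ≤ M * (30 * r^2) := by gcongr
      _ ≤ _ := by nlinarith [sq_nonneg r]
  exact fin_alg hW0 hr0 hr6 b2

lemma incr_inj {i j : Fin 6} (h1 : (rpsIncr i).1 = (rpsIncr j).1)
    (h2 : (rpsIncr i).2.1 = (rpsIncr j).2.1) : i = j := by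
  fin_cases i <;> fin_cases j <;> first | rfl | (exfalso; revert h1 h2; norm_num [rpsIncr])


lemma ae_le_of_sub {Ω : Type*} {m m0 : MeasurableSpace Ω} {μ : Measure Ω} [IsFiniteMeasure μ]
    (hm : m ≤ m0) {f g : Ω → ℝ} (hf : StronglyMeasurable[m] f) (hg : StronglyMeasurable[m] g)
    (hfi : Integrable f μ) (hgi : Integrable g μ)
    (h : ∀ s, MeasurableSet[m] s → ∫ x in s, f x ∂μ ≤ ∫ x in s, g x ∂μ) : f ≤ᵐ[μ] g := by
  refine ae_le_of_ae_le_trim (hm := hm) ?_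
  refine ae_le_of_forall_setIntegral_le (hfi.trim hm hf) (hgi.trim hm hg) fun s hs _ => ?_
  rw [← setIntegral_trim hm hf hs, ← setIntegral_trim hm hg hs]
  exact h s hs

lemma pos_limit {Ω : Type*} [m0 : MeasurableSpace Ω] {μ : Measure Ω} [IsProbabilityMeasure μ]
    (F : Filtration ℕ m0) (G U : ℕ → Ω → ℝ) (hG : Submartingale G F μ)
    (hU2 : Supermartingale (fun n ω => U n ω ^ 2) F μ) (hU : StronglyAdapted F U)
    (C c : ℝ) (hc : 0 < c) (hGb : ∀ n ω, |G n ω| ≤ C) (hUpos : ∀ n ω, 0 < U n ω)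
    (hUb : ∀ n ω, U n ω ≤ C) (hUG : ∀ n ω, c * U n ω ≤ G n ω)
    (hdiff : ∀ ω, Tendsto (fun n => U n ω - G n ω) atTop (𝓝 0)) :
    ∀ᵐ ω ∂μ, ∃ l, l ≠ 0 ∧ Tendsto (fun n => G n ω) atTop (𝓝 l) := by
  obtain ⟨L, hLm, hconv⟩ : ∃ L : Ω → ℝ, StronglyMeasurable[⨆ n, F n] L ∧
      ∀ᵐ ω ∂μ, Tendsto (fun n => G n ω) atTop (𝓝 (L ω)) := by
    refine ⟨_, Filtration.stronglyMeasurable_limitProcess,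
      hG.ae_tendsto_limitProcess (R := C.toNNReal) fun n => ?_⟩
    refine (eLpNorm_le_of_ae_bound (C := C) (ae_of_all _ fun ω => hGb n ω)).trans ?_
    simp [ENNReal.ofReal]
  have hle : ⨆ n, F n ≤ m0 := iSup_le fun n => F.le n
  set S : Set Ω := {ω | L ω ≠ 0} with hS
  have hSm : MeasurableSet[⨆ n, F n] S :=
    (hLm.measurable (measurableSet_singleton (0:ℝ))).compl
  set H : Ω → ℝ := S.indicator (fun _ => 1) with hH
  have hHm : StronglyMeasurable[⨆ n, F n] H := stronglyMeasurable_const.indicator hSm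
  have hHi : Integrable H μ := (integrable_const 1).indicator (hle _ hSm)
  have hUm : ∀ n, AEStronglyMeasurable (U n) μ := fun n => ((hU n).mono (F.le n)).aestronglyMeasurable
  have hGm : ∀ n, AEStronglyMeasurable (G n) μ := fun n => (hG.integrable n).1
  have hUabs : ∀ n ω, |U n ω| ≤ C := fun n ω => by
    rw [abs_of_pos (hUpos n ω)]; exact hUb n ω
  have key : ∀ n, ∀ᵐ ω ∂μ, c ^ 2 ≤ (μ[H | F n]) ω := by
    intro n
    have hU2n : StronglyMeasurable[F n] (fun ω => U n ω ^ 2) := (hU n).pow 2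
    have hU2H : Integrable ((fun ω => U n ω ^ 2) * H) μ := by
      refine hHi.bdd_mul (c := C ^ 2) (hU2.integrable n).1 (ae_of_all _ fun ω => ?_)
      rw [Real.norm_eq_abs, abs_pow]
      exact pow_le_pow_left₀ (abs_nonneg _) (hUabs n ω) 2
    have pull := condExp_mul_of_stronglyMeasurable_left hU2n hU2H hHi
    have main : (fun ω => c ^ 2 * U n ω ^ 2) ≤ᵐ[μ] μ[(fun ω => U n ω ^ 2) * H | F n] := by
      refine ae_le_of_sub (F.le n) (hU2n.const_mul _) stronglyMeasurable_condExp
        ((hU2.integrable n).const_mul _) integrable_condExp fun B hB => ?_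
      rw [setIntegral_condExp (F.le n) hU2H hB]
      have hUG_int : ∀ m, Integrable (fun ω => U n ω * G m ω) μ := fun m =>
        (hG.integrable m).bdd_mul (c := C) (hUm n) (ae_of_all _ fun ω => hUabs n ω)
      have hk_int : ∀ m, Integrable (fun ω => 2 * c * (U n ω * G m ω) - c ^ 2 * U m ω ^ 2) μ :=
        fun m => ((hUG_int m).const_mul _).sub ((hU2.integrable m).const_mul _)
      have hlow : ∀ m, n ≤ m → ∫ ω in B, c ^ 2 * U n ω ^ 2 ∂μ
          ≤ ∫ ω in B, (2 * c * (U n ω * G m ω) - c ^ 2 * U m ω ^ 2) ∂μ := by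
        intro m hm
        have h1 : ∫ ω in B, c * U n ω ^ 2 ∂μ ≤ ∫ ω in B, U n ω * G m ω ∂μ := by
          rw [← setIntegral_condExp (F.le n) (hUG_int m) hB]
          refine setIntegral_mono_ae ((hU2.integrable n).const_mul _).integrableOn
            integrable_condExp.integrableOn ?_
          filter_upwards [condExp_mul_of_stronglyMeasurable_left (hU n) (hUG_int m) (hG.integrable m),
            hG.2.1 n m hm] with ω h1 h2
          have h3 : (μ[fun ω => U n ω * G m ω | F n]) ω = U n ω * (μ[G m | F n]) ω := h1
          rw [h3]
          have h4 := hUG n ω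
          calc c * U n ω ^ 2 = U n ω * (c * U n ω) := by ring
            _ ≤ _ := mul_le_mul_of_nonneg_left (h4.trans h2) (hUpos n ω).le
        have h2 := hU2.setIntegral_le hm hB
        rw [integral_sub ((hUG_int m).const_mul _).integrableOn
          ((hU2.integrable m).const_mul _).integrableOn]
        simp only [integral_const_mul] at h1 ⊢
        have h3 := mul_le_mul_of_nonneg_left h1 hc.le
        have h4 := mul_le_mul_of_nonneg_left h2 (sq_nonneg c)
        linarith
      have hC0 : ∀ ω : Ω, 0 ≤ C := fun ω => (abs_nonneg _).trans (hGb 0 ω)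
      have hlim : Tendsto (fun m => ∫ ω in B, (2 * c * (U n ω * G m ω) - c ^ 2 * U m ω ^ 2) ∂μ)
          atTop (𝓝 (∫ ω in B, (2 * c * (U n ω * L ω) - c ^ 2 * L ω ^ 2) ∂μ)) := by
        refine tendsto_integral_of_dominated_convergence
          (fun _ => 2 * c * (C * C) + c ^ 2 * C ^ 2) (fun m => (hk_int m).1.restrict)
          (integrable_const _) (fun m => ae_of_all _ fun ω => ?_) (ae_restrict_of_ae ?_)
        · have hC := hC0 ω
          rw [Real.norm_eq_abs]
          refine (abs_sub _ _).trans ?_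
          rw [abs_mul, abs_mul (U n ω), abs_mul (c ^ 2), abs_pow (U m ω), abs_of_pos (by positivity : 0 < 2 * c),
            abs_of_pos (by positivity : 0 < c ^ 2)]
          have := hUabs n ω
          have := hUabs m ω
          have := hGb m ω
          gcongr
        · filter_upwards [hconv] with ω hω
          have hUl : Tendsto (fun m => U m ω) atTop (𝓝 (L ω)) := by
            simpa using (hdiff ω).add hω
          exact ((hω.const_mul _).const_mul _).sub ((hUl.pow 2).const_mul _)
      have h5 := ge_of_tendsto hlim (eventually_atTop.2 ⟨n, hlow⟩)
      refine h5.trans ?_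
      by_cases hint : Integrable (fun ω => 2 * c * (U n ω * L ω) - c ^ 2 * L ω ^ 2) μ
      · refine integral_mono hint.integrableOn hU2H.integrableOn fun ω => ?_
        simp only [Pi.mul_apply, hH]
        by_cases hω : L ω = 0
        · have : ω ∉ S := by simp [hS, hω]
          simp [this, hω]
        · have : ω ∈ S := hω
          simp only [this, indicator_of_mem, mul_one]
          nlinarith [sq_nonneg (U n ω - c * L ω)]
      · exfalso; apply hint
        have hLi : ∀ᵐ ω ∂μ, |L ω| ≤ C := by
          filter_upwards [hconv] with ω hω
          exact le_of_tendsto hω.abs (Eventually.of_forall fun m => hGb m ω)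
        have hLm' := (hLm.mono hle).aestronglyMeasurable (μ := μ)
        have hL1 : Integrable L μ := Integrable.of_bound hLm' C hLi
        refine ((hL1.bdd_mul (c := C) (hUm n) (ae_of_all _ fun ω => hUabs n ω)).const_mul _).sub
          (Integrable.const_mul ?_ _)
        simpa [sq] using hL1.bdd_mul (c := C) hLm' hLi
    filter_upwards [main, pull] with ω h1 h2
    rw [h2, Pi.mul_apply] at h1
    have hp : 0 < U n ω ^ 2 := pow_pos (hUpos n ω) 2
    rw [mul_comm] at h1
    exact le_of_mul_le_mul_left h1 hp
  filter_upwards [hconv, ae_all_iff.2 key, hHi.tendsto_ae_condExp hHm] with ω h1 h2 h3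
  refine ⟨L ω, ?_, h1⟩
  have h4 : c ^ 2 ≤ H ω := ge_of_tendsto' h3 h2
  intro h0
  have : ω ∉ S := by simp [hS, h0]
  rw [hH, indicator_of_notMem this] at h4
  have : 0 < c ^ 2 := by positivity
  linarith
section
variable {Ω : Type*} [m0 : MeasurableSpace Ω] {μ : Measure Ω} [IsProbabilityMeasure μ]
  {γ₀ : ℝ} (c : RPSChain μ γ₀)

lemma cont_sm (n : ℕ) {h : ℝ × ℝ × ℝ → ℝ} (hh : Continuous h) :
    StronglyMeasurable[c.F n] (fun ω => h (c.X n ω, c.Y n ω, c.Z n ω)) := by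
  have : Measurable[c.F n] (fun ω => (c.X n ω, c.Y n ω, c.Z n ω)) :=
    (c.adapted_X n).prodMk ((c.adapted_Y n).prodMk (c.adapted_Z n))
  exact (hh.measurable.comp this).stronglyMeasurable

lemma cont_bdd (n : ℕ) {h : ℝ × ℝ × ℝ → ℝ} (hh : Continuous h) :
    ∃ C, ∀ ω, ‖h (c.X n ω, c.Y n ω, c.Z n ω)‖ ≤ C := by
  obtain ⟨C, hC⟩ := ((isCompact_Icc (a := (0:ℝ)) (b := 1)).prod
    ((isCompact_Icc (a := (0:ℝ)) (b := 1)).prod (isCompact_Icc (a := (0:ℝ)) (b := 1)))).exists_bound_of_continuousOn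
    hh.continuousOn
  refine ⟨C, fun ω => hC _ ?_⟩
  have hx := c.nonneg_X n ω
  have hy := c.nonneg_Y n ω
  have hz := c.nonneg_Z n ω
  have hs := c.sum_eq_one n ω
  refine ⟨⟨hx, ?_⟩, ⟨hy, ?_⟩, ⟨hz, ?_⟩⟩ <;> simp only <;> linarith

lemma cont_int (n : ℕ) {h : ℝ × ℝ × ℝ → ℝ} (hh : Continuous h) :
    Integrable (fun ω => h (c.X n ω, c.Y n ω, c.Z n ω)) μ := by
  obtain ⟨C, hC⟩ := cont_bdd c n hh
  exact Integrable.of_bound ((cont_sm c n hh).mono (c.F.le n)).aestronglyMeasurable C (ae_of_all _ hC)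

lemma step_condExp (hγ₀ : 2 ≤ γ₀) (n : ℕ) {h : ℝ × ℝ × ℝ → ℝ} (hh : Continuous h) :
    μ[fun ω => h (c.X (n+1) ω, c.Y (n+1) ω, c.Z (n+1) ω) | c.F n] =ᵐ[μ] fun ω =>
      ∑ i, rpsProb i (c.X n ω) (c.Y n ω) (c.Z n ω) *
        h (nxX (rpsGamma γ₀ (n+1)) i (c.X n ω), nxY (rpsGamma γ₀ (n+1)) i (c.Y n ω),
          nxZ (rpsGamma γ₀ (n+1)) i (c.Z n ω)) := by
  have hg : rpsGamma γ₀ n = rpsGamma γ₀ (n+1) - 4 := by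
    simp only [rpsGamma]; push_cast; ring
  have hstep := c.step n
  rw [hg] at hstep
  have hs0 : rpsGamma γ₀ (n+1) ≠ 0 := by
    have : 0 < rpsGamma γ₀ (n+1) := by simp only [rpsGamma]; positivity
    exact this.ne'
  generalize rpsGamma γ₀ (n+1) = s at *
  let E : Fin 6 → Set Ω := fun i => {ω | c.X (n+1) ω = nxX s i (c.X n ω) ∧
    c.Y (n+1) ω = nxY s i (c.Y n ω) ∧ c.Z (n+1) ω = nxZ s i (c.Z n ω)}
  let I : Fin 6 → Ω → ℝ := fun i => (E i).indicator (fun _ => (1:ℝ))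
  have hstep' : ∀ i, μ[I i | c.F n] =ᵐ[μ] fun ω => rpsProb i (c.X n ω) (c.Y n ω) (c.Z n ω) :=
    hstep
  have mX : ∀ k, Measurable (c.X k) := fun k => (c.adapted_X k).mono (c.F.le k) le_rfl
  have mY : ∀ k, Measurable (c.Y k) := fun k => (c.adapted_Y k).mono (c.F.le k) le_rfl
  have mZ : ∀ k, Measurable (c.Z k) := fun k => (c.adapted_Z k).mono (c.F.le k) le_rfl
  have hE : ∀ i, MeasurableSet (E i) := by
    intro i
    refine (measurableSet_eq_fun (mX (n+1)) (g := fun ω => nxX s i (c.X n ω)) ?_).inter ((measurableSet_eq_fun (mY (n+1)) (g := fun ω => nxY s i (c.Y n ω)) ?_).inter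
      (measurableSet_eq_fun (mZ (n+1)) (g := fun ω => nxZ s i (c.Z n ω)) ?_))
    · unfold nxX; exact (((mX n).const_mul _).add_const _).div_const _
    · unfold nxY; exact (((mY n).const_mul _).add_const _).div_const _
    · unfold nxZ; exact (((mZ n).const_mul _).add_const _).div_const _
  have hI : ∀ i, Integrable (I i) μ := fun i => (integrable_const 1).indicator (hE i)
  have hdisj : ∀ ω i j, ω ∈ E i → ω ∈ E j → i = j := by
    intro ω i j hi hj
    apply incr_inj
    · have := hi.1.symm.trans hj.1
      unfold nxX at this; field_simp at this; linarith
    · have := hi.2.1.symm.trans hj.2.1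
      unfold nxY at this; field_simp at this; linarith
  have hone : ∀ ω i, ω ∈ E i → ∀ g : Fin 6 → ℝ, ∑ j, g j * I j ω = g i := by
    intro ω i hi g
    rw [Finset.sum_eq_single i]
    · simp [I, hi]
    · intro j _ hj
      have : ω ∉ E j := fun h' => hj (hdisj ω j i h' hi)
      simp [I, this]
    · simp
  have hsumle : ∀ ω, ∑ i, I i ω ≤ 1 := by
    intro ω
    by_cases hex : ∃ i, ω ∈ E i
    · obtain ⟨i, hi⟩ := hex
      have := hone ω i hi (fun _ => 1)
      simp only [one_mul] at this
      exact this.le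
    · push Not at hex
      simp [I, hex]
  have hint1 : ∫ ω, ∑ i, I i ω ∂μ = 1 := by
    rw [integral_finsetSum _ fun i _ => hI i]
    have : ∀ i, ∫ ω, I i ω ∂μ = ∫ ω, rpsProb i (c.X n ω) (c.Y n ω) (c.Z n ω) ∂μ := by
      intro i
      rw [← integral_condExp (c.F.le n)]
      exact integral_congr_ae (hstep' i)
    simp_rw [this]
    rw [← integral_finsetSum _ fun i _ => ?_]
    · simp_rw [fun ω => prob_sum (c.sum_eq_one n ω)]
      simp
    · exact integrable_condExp.congr (hstep' i)
  have hcov : ∀ᵐ ω ∂μ, ∃ i, ω ∈ E i := by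
    have hii : Integrable (fun ω => 1 - ∑ i, I i ω) μ :=
      (integrable_const 1).sub (integrable_finsetSum _ fun i _ => hI i)
    have h0 : ∫ ω, (1 - ∑ i, I i ω) ∂μ = 0 := by
      rw [integral_sub (integrable_const 1) (integrable_finsetSum _ fun i _ => hI i), hint1]
      simp
    have := (integral_eq_zero_iff_of_nonneg (fun ω => sub_nonneg.2 (hsumle ω)) hii).1 h0
    filter_upwards [this] with ω hω
    by_contra hex
    push Not at hex
    simp [I, hex] at hω
  let hn : Fin 6 → ℝ × ℝ × ℝ → ℝ := fun i p => h (nxX s i p.1, nxY s i p.2.1, nxZ s i p.2.2)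
  have hnc : ∀ i, Continuous (hn i) := by
    intro i
    refine hh.comp ?_
    unfold nxX nxY nxZ
    fun_prop
  let K : Fin 6 → Ω → ℝ := fun i ω => hn i (c.X n ω, c.Y n ω, c.Z n ω)
  have hKI : ∀ i, Integrable (K i * I i) μ := by
    intro i
    obtain ⟨C, hC⟩ := cont_bdd c n (hnc i)
    exact (hI i).bdd_mul (c := C) (cont_int c n (hnc i)).1 (ae_of_all _ hC)
  have heq : (fun ω => h (c.X (n+1) ω, c.Y (n+1) ω, c.Z (n+1) ω)) =ᵐ[μ] ∑ i, K i * I i := by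
    filter_upwards [hcov] with ω ⟨i, hi⟩
    rw [Finset.sum_apply]
    simp only [Pi.mul_apply]
    rw [hone ω i hi (fun j => K j ω)]
    simp only [K, hn, hi.1, hi.2.1, hi.2.2]
  have hpull : ∀ i, μ[K i * I i | c.F n] =ᵐ[μ] K i * μ[I i | c.F n] := fun i =>
    condExp_mul_of_stronglyMeasurable_left (cont_sm c n (hnc i)) (hKI i) (hI i)
  refine (condExp_congr_ae heq).trans ((condExp_finsetSum (fun i _ => hKI i) _).trans ?_)
  filter_upwards [ae_all_iff.2 hpull, ae_all_iff.2 hstep'] with ω h1 h2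
  rw [Finset.sum_apply]
  refine Finset.sum_congr rfl fun i _ => ?_
  rw [h1 i, Pi.mul_apply, h2 i, mul_comm]

end

theorem rps_limsup_lt
    {Ω : Type*} [MeasurableSpace Ω] (μ : Measure Ω) [IsProbabilityMeasure μ]
    (γ₀ : ℝ) (hγ₀ : 2 ≤ γ₀) (c : RPSChain μ γ₀) :
    ∀ᵐ ω ∂μ,
      limsup (fun n => c.X n ω * c.Y n ω * c.Z n ω) atTop < 1/27 ∧
      (∀ M : ℝ, Tendsto (fun n => c.X n ω * c.Y n ω * c.Z n ω) atTop (𝓝 M) → M < 1/27) := by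
  set g := rpsGamma γ₀ with hgdef
  have hg2 : ∀ n, 2 ≤ g n := fun n => by
    simp only [hgdef, rpsGamma]
    have : (0:ℝ) ≤ n := n.cast_nonneg
    linarith
  have hgs : ∀ n, g (n+1) - 4 = g n := fun n => by
    simp only [hgdef, rpsGamma]; push_cast; ring
  have hg6 : ∀ n, 6 ≤ g (n+1) := fun n => by linarith [hg2 n, hgs n]
  have hginv : Tendsto (fun n => (g n)⁻¹) atTop (𝓝 0) := by
    apply Tendsto.inv_tendsto_atTop
    simp only [hgdef]
    unfold rpsGamma
    exact tendsto_atTop_add_const_left _ _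
      (tendsto_natCast_atTop_atTop.const_mul_atTop (by norm_num))
  set M : ℕ → Ω → ℝ := fun n ω => c.X n ω * c.Y n ω * c.Z n ω with hM
  have hM0 : ∀ n ω, 0 ≤ M n ω := fun n ω =>
    mul_nonneg (mul_nonneg (c.nonneg_X n ω) (c.nonneg_Y n ω)) (c.nonneg_Z n ω)
  have hM1 : ∀ n ω, M n ω ≤ 1/27 := fun n ω =>
    amgm (c.nonneg_X n ω) (c.nonneg_Y n ω) (c.nonneg_Z n ω) (c.sum_eq_one n ω)
  let hG : ℕ → ℝ × ℝ × ℝ → ℝ := fun n p => 1/27 - (1 - 1 / g n) * (p.1 * p.2.1 * p.2.2)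
  let hU : ℕ → ℝ × ℝ × ℝ → ℝ := fun n p => 1/27 - (p.1 * p.2.1 * p.2.2) + 25 / g n
  have hGc : ∀ n, Continuous (hG n) := fun n => by fun_prop
  have hUc : ∀ n, Continuous (hU n) := fun n => by fun_prop
  let G : ℕ → Ω → ℝ := fun n ω => hG n (c.X n ω, c.Y n ω, c.Z n ω)
  let U : ℕ → Ω → ℝ := fun n ω => hU n (c.X n ω, c.Y n ω, c.Z n ω)
  have hGe : ∀ n ω, G n ω = 1/27 - (1 - (g n)⁻¹) * M n ω := fun n ω => by
    simp only [G, hG, hM, one_div]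
  have hUe : ∀ n ω, U n ω = 1/27 - M n ω + 25 * (g n)⁻¹ := fun n ω => by
    simp only [U, hU, hM, div_eq_mul_inv]
  have hgi0 : ∀ n, 0 < (g n)⁻¹ := fun n => inv_pos.2 (by linarith [hg2 n])
  have hgi1 : ∀ n, (g n)⁻¹ ≤ 1/2 := fun n => by
    rw [one_div]; exact inv_anti₀ (by norm_num) (hg2 n)
  have hGsub : Submartingale G c.F μ := by
    refine submartingale_nat (fun n => cont_sm c n (hGc n)) (fun n => cont_int c n (hGc n)) fun n => ?_
    filter_upwards [step_condExp c hγ₀ n (hGc (n+1))] with ω hω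
    refine le_of_le_of_eq ?_ hω.symm
    have := det_T (g (n+1)) (hg6 n) (c.nonneg_X n ω) (c.nonneg_Y n ω) (c.nonneg_Z n ω)
      (c.sum_eq_one n ω)
    rw [hgs n] at this
    exact this
  have hUsup : Supermartingale (fun n ω => U n ω ^ 2) c.F μ := by
    have hU2c : ∀ n, Continuous (fun p => hU n p ^ 2) := fun n => (hUc n).pow 2
    refine supermartingale_nat (fun n => cont_sm c n (hU2c n)) (fun n => cont_int c n (hU2c n))
      fun n => ?_
    filter_upwards [step_condExp c hγ₀ n (hU2c (n+1))] with ω hω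
    refine le_of_eq_of_le hω ?_
    have := det_U (g (n+1)) (hg6 n) (c.nonneg_X n ω) (c.nonneg_Y n ω) (c.nonneg_Z n ω)
      (c.sum_eq_one n ω)
    rw [hgs n] at this
    exact this
  have hmain := pos_limit c.F G U hGsub hUsup (fun n => cont_sm c n (hUc n)) 13 (1/675)
    (by norm_num)
    (fun n ω => by
      rw [hGe, abs_le]
      have := mul_nonneg (hgi0 n).le (hM0 n ω)
      have := mul_le_mul_of_nonneg_right (hgi1 n) (hM0 n ω)
      constructor <;> linarith [hM0 n ω, hM1 n ω])
    (fun n ω => by rw [hUe]; linarith [hM1 n ω, hgi0 n])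
    (fun n ω => by rw [hUe]; linarith [hM0 n ω, hgi1 n])
    (fun n ω => by
      rw [hGe, hUe]
      nlinarith [hM0 n ω, mul_nonneg (sub_nonneg.2 (hM1 n ω)) (sub_nonneg.2 (hgi1 n)), hM1 n ω])
    (fun ω => by
      have hb : Tendsto (fun n => (g n)⁻¹ * (25 - M n ω)) atTop (𝓝 0) := by
        refine squeeze_zero (g := fun n => (g n)⁻¹ * 25) (fun n => ?_) (fun n => ?_) (by simpa using hginv.mul_const 25)
        · exact mul_nonneg (hgi0 n).le (by linarith [hM1 n ω])
        · exact mul_le_mul_of_nonneg_left (by linarith [hM0 n ω]) (hgi0 n).le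
      refine hb.congr fun n => ?_
      rw [hGe, hUe]; ring)
  filter_upwards [hmain] with ω ⟨l, hl, hlim⟩
  have hMlim : Tendsto (fun n => M n ω) atTop (𝓝 (1/27 - l)) := by
    have hb : Tendsto (fun n => (g n)⁻¹ * M n ω) atTop (𝓝 0) := by
      refine squeeze_zero (fun n => mul_nonneg (hgi0 n).le (hM0 n ω)) (fun n => ?_) hginv
      exact mul_le_of_le_one_right (hgi0 n).le (by linarith [hM1 n ω])
    have := (hlim.const_sub (1/27)).add hb
    rw [add_zero] at this
    refine this.congr fun n => ?_
    rw [hGe]; ring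
  have hl' : 1/27 - l < 1/27 := by
    have h1 : 1/27 - l ≤ 1/27 := le_of_tendsto' hMlim fun n => hM1 n ω
    have : 0 < l := lt_of_le_of_ne (by linarith) (Ne.symm hl)
    linarith
  refine ⟨?_, fun N hN => ?_⟩
  · rw [hMlim.limsup_eq]; exact hl'
  · rw [tendsto_nhds_unique hN hMlim]; exact hl'
end
end

section
/- In the choose-random-visible-type chain, for every i ∈ {1,…,N}, almost surely x_i(n) → 1/N as n → ∞. -/
open MeasureTheory ProbabilityTheory Filter Set Topology Finset

noncomputable section

/-- `γ_n = γ₀ + 2 m n`. -/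
def visGamma (γ₀ : ℝ) (m : ℕ) (n : ℕ) : ℝ := γ₀ + 2 * m * n

/-- The choose-random-visible-type preferential attachment chain with `N` types where each
new vertex chooses `m` neighbours: `x n` is the vector of proportions of edge-ends of each
type, `T (n+1)` records the types of the `m` chosen neighbours of vertex `n+1`, sampled
(conditionally on `𝔉 n`) i.i.d. according to `x n`, and `τ (n+1)` is the type adopted by
vertex `n+1`, chosen uniformly at random among the types present among its neighbours. -/
structure VisChain {Ω : Type*} [MeasurableSpace Ω] (μ : Measure Ω)
    (N m : ℕ) (γ₀ : ℝ) where
  F : Filtration ℕ ‹MeasurableSpace Ω›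
  x : ℕ → Fin N → Ω → ℝ
  T : ℕ → Ω → Fin m → Fin N
  τ : ℕ → Ω → Fin N
  adapted_x : ∀ i, Adapted F fun n => x n i
  meas_T : ∀ n, Measurable[F (n + 1)] (T (n + 1))
  meas_τ : ∀ n, Measurable[F (n + 1)] (τ (n + 1))
  nonneg : ∀ n i ω, 0 ≤ x n i ω
  sum_eq_one : ∀ n ω, ∑ i, x n i ω = 1
  init_pos : ∀ i ω, 0 < x 0 i ω
  init_const : ∀ i ω ω', x 0 i ω = x 0 i ω'
  step_law : ∀ (n : ℕ) (t : Fin m → Fin N) (i : Fin N),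
    μ[Set.indicator {ω | T (n + 1) ω = t ∧ τ (n + 1) ω = i} (fun _ => (1 : ℝ)) | F n]
      =ᵐ[μ] fun ω => (∏ j, x n (t j) ω) *
        (if i ∈ Finset.univ.image t then 1 / ((Finset.univ.image t).card : ℝ) else 0)
  update : ∀ (n : ℕ) (i : Fin N) (ω : Ω),
    x (n + 1) i ω =
      (visGamma γ₀ m n * x n i ω
          + ((Finset.univ.filter fun j => T (n + 1) ω j = i).card : ℝ)
          + m * (if τ (n + 1) ω = i then (1 : ℝ) else 0)) / visGamma γ₀ m (n + 1)

def vP {N m : ℕ} (x : Fin N → ℝ) (t : Fin m → Fin N) : ℝ := ∏ j, x (t j)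
def vc {N m : ℕ} (t : Fin m → Fin N) (i : Fin N) : ℝ :=
  ((Finset.univ.filter fun j => t j = i).card : ℝ)
def vw {N m : ℕ} (t : Fin m → Fin N) (i : Fin N) : ℝ :=
  if i ∈ Finset.univ.image t then 1 / ((Finset.univ.image t).card : ℝ) else 0
def vh {N m : ℕ} (x : Fin N → ℝ) (t : Fin m → Fin N) (a : Fin N) : ℝ :=
  ∑ i, (vc t i + m * (if a = i then (1 : ℝ) else 0)) / x i
def vG {N : ℕ} (m : ℕ) (x : Fin N → ℝ) : ℝ :=
  ∑ t : Fin m → Fin N, ∑ a, vh x t a * (vP x t * vw t a) - 2 * m * N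
def ve {N m : ℕ} (t : Fin m → Fin N) (i j : Fin N) : ℝ :=
  if i ∈ Finset.univ.image t ∧ j ∈ Finset.univ.image t then
    1 / ((Finset.univ.image t).card : ℝ) else 0

lemma vc_sum {N m : ℕ} (t : Fin m → Fin N) : ∑ i, vc t i = m := by
  unfold vc
  have := Finset.card_eq_sum_card_fiberwise (s := (Finset.univ : Finset (Fin m)))
    (t := (Finset.univ : Finset (Fin N))) (f := t) (by intro a _; simp)
  rw [Finset.card_univ, Fintype.card_fin] at this
  exact_mod_cast this.symm

lemma vc_zero {N m : ℕ} (t : Fin m → Fin N) (i : Fin N) (h : i ∉ Finset.univ.image t) :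
    vc t i = 0 := by
  unfold vc
  simp only [Nat.cast_eq_zero, Finset.card_eq_zero, Finset.filter_eq_empty_iff]
  intro j _ hj
  exact h (Finset.mem_image.2 ⟨j, Finset.mem_univ _, hj⟩)

lemma vimg_pos {N m : ℕ} (hm : 3 ≤ m) (t : Fin m → Fin N) :
    0 < ((Finset.univ.image t).card : ℝ) := by
  have : 0 < (Finset.univ.image t).card :=
    Finset.card_pos.2 ⟨t ⟨0, by omega⟩, Finset.mem_image_of_mem _ (Finset.mem_univ _)⟩
  exact_mod_cast this

lemma vw_sum {N m : ℕ} (hm : 3 ≤ m) (t : Fin m → Fin N) : ∑ a, vw t a = 1 := by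
  unfold vw
  have := vimg_pos hm t
  rw [Finset.sum_ite_mem, Finset.univ_inter, Finset.sum_const, nsmul_eq_mul]
  field_simp

lemma vP_c {N m : ℕ} (x : Fin N → ℝ) (hx : ∑ i, x i = 1) (i : Fin N) :
    ∑ t : Fin m → Fin N, vP x t * vc t i = m * x i := by
  have h1 : ∀ t : Fin m → Fin N, vP x t * vc t i
      = ∑ k : Fin m, ∏ j, (if j = k then (if t j = i then x (t j) else 0) else x (t j)) := by
    intro t
    unfold vc vP
    rw [Finset.card_filter]
    push_cast
    rw [Finset.mul_sum]
    refine Finset.sum_congr rfl fun k _ => ?_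
    rw [← Finset.mul_prod_erase _ (fun j => x (t j)) (Finset.mem_univ k),
      ← Finset.mul_prod_erase _ (fun j => if j = k then (if t j = i then x (t j) else 0) else x (t j))
        (Finset.mem_univ k)]
    have : ∏ j ∈ Finset.univ.erase k, (if j = k then (if t j = i then x (t j) else 0) else x (t j))
        = ∏ j ∈ Finset.univ.erase k, x (t j) :=
      Finset.prod_congr rfl fun j hj => if_neg (Finset.ne_of_mem_erase hj)
    rw [this]
    by_cases h : t k = i <;> simp [h]
  rw [Finset.sum_congr rfl fun t _ => h1 t, Finset.sum_comm]
  have h2 : ∀ k : Fin m, ∑ t : Fin m → Fin N,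
      ∏ j, (if j = k then (if t j = i then x (t j) else 0) else x (t j)) = x i := by
    intro k
    have := Finset.prod_univ_sum (fun _ : Fin m => (Finset.univ : Finset (Fin N)))
      (fun j a => (if j = k then (if a = i then x a else 0) else x a))
    rw [Fintype.piFinset_univ] at this
    rw [← this, ← Finset.mul_prod_erase _ _ (Finset.mem_univ k)]
    have h3 : ∏ j ∈ Finset.univ.erase k,
        ∑ a, (if j = k then (if a = i then x a else 0) else x a) = 1 :=
      Finset.prod_eq_one fun j hj => by
        simp only [if_neg (Finset.ne_of_mem_erase hj)]; exact hx
    rw [h3]; simp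
  rw [Finset.sum_congr rfl fun k _ => h2 k]
  simp

lemma vw_sub {N m : ℕ} (hm : 3 ≤ m) (t : Fin m → Fin N) (i : Fin N) :
    m * vw t i - vc t i = ∑ j, ve t i j * (vc t j - vc t i) := by
  have hp := vimg_pos hm t
  by_cases hi : i ∈ Finset.univ.image t
  · have h1 : ∀ j, ve t i j * (vc t j - vc t i)
        = 1 / ((Finset.univ.image t).card : ℝ) * vc t j
          - (if j ∈ Finset.univ.image t then 1 / ((Finset.univ.image t).card : ℝ) * vc t i else 0) := by
      intro j
      unfold ve
      by_cases hj : j ∈ Finset.univ.image t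
      · rw [if_pos ⟨hi, hj⟩, if_pos hj]; ring
      · rw [if_neg (fun h => hj h.2), if_neg hj, vc_zero t j hj]; ring
    rw [Finset.sum_congr rfl fun j _ => h1 j, Finset.sum_sub_distrib, ← Finset.mul_sum, vc_sum,
      Finset.sum_ite_mem, Finset.univ_inter, Finset.sum_const, nsmul_eq_mul, vw, if_pos hi]
    field_simp
  · have h1 : ∀ j, ve t i j * (vc t j - vc t i) = 0 := by
      intro j
      unfold ve
      rw [if_neg (fun h => hi h.1), zero_mul]
    rw [Finset.sum_congr rfl fun j _ => h1 j, vc_zero t i hi, vw, if_neg hi]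
    simp

def vs {N m : ℕ} (i j : Fin N) (t : Fin m → Fin N) : Fin m → Fin N := fun k => Equiv.swap i j (t k)

lemma vs_vs {N m : ℕ} (i j : Fin N) (t : Fin m → Fin N) : vs i j (vs i j t) = t := by
  funext k; simp [vs]

def vsE {N : ℕ} (m : ℕ) (i j : Fin N) : (Fin m → Fin N) ≃ (Fin m → Fin N) :=
  ⟨vs i j, vs i j, vs_vs i j, vs_vs i j⟩

lemma vs_img {N m : ℕ} (i j : Fin N) (t : Fin m → Fin N) (a : Fin N) :
    a ∈ Finset.univ.image (vs i j t) ↔ Equiv.swap i j a ∈ Finset.univ.image t := by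
  simp only [Finset.mem_image, Finset.mem_univ, true_and, vs]
  refine exists_congr fun k => ?_
  constructor
  · intro h; rw [← h]; simp
  · intro h; rw [h]; simp

lemma vs_ve {N m : ℕ} (i j : Fin N) (t : Fin m → Fin N) : ve (vs i j t) i j = ve t i j := by
  have hc : (Finset.univ.image (vs i j t)).card = (Finset.univ.image t).card := by
    have : Finset.univ.image (vs i j t) = (Finset.univ.image t).image (Equiv.swap i j) := by
      rw [Finset.image_image]; rfl
    rw [this, Finset.card_image_of_injective _ (Equiv.injective _)]
  unfold ve
  have h1 := vs_img i j t i
  have h2 := vs_img i j t j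
  rw [Equiv.swap_apply_left] at h1
  rw [Equiv.swap_apply_right] at h2
  exact if_congr (by rw [h1, h2, and_comm]) (by rw [hc]) rfl

lemma vs_vc {N m : ℕ} (i j : Fin N) (t : Fin m → Fin N) (a : Fin N) :
    vc (vs i j t) a = vc t (Equiv.swap i j a) := by
  unfold vc vs
  congr 2
  ext k
  simp only [Finset.mem_filter, Finset.mem_univ, true_and]
  constructor
  · intro h; rw [← h]; simp
  · intro h; rw [h]; simp

lemma vP_pow {N m : ℕ} (x : Fin N → ℝ) (t : Fin m → Fin N) :
    vP x t = ∏ a, x a ^ (Finset.univ.filter fun k => t k = a).card := by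
  unfold vP
  rw [← Finset.prod_fiberwise (Finset.univ : Finset (Fin m)) t]
  refine Finset.prod_congr rfl fun a _ => ?_
  rw [← Finset.prod_const]
  refine Finset.prod_congr rfl fun k hk => ?_
  rw [(Finset.mem_filter.1 hk).2]

lemma vpow_aux (a b : ℝ) (ha : 0 < a) (hb : 0 < b) (p q : ℕ) :
    0 ≤ (a ^ p * b ^ q - a ^ q * b ^ p) * ((q : ℝ) - p) * (1 / a - 1 / b) ∧
    (a ≠ b → p ≠ q → 0 < (a ^ p * b ^ q - a ^ q * b ^ p) * ((q : ℝ) - p) * (1 / a - 1 / b)) := by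
  have key : ∀ a b : ℝ, 0 < a → a < b → ∀ p q : ℕ, p < q →
      0 < (a ^ p * b ^ q - a ^ q * b ^ p) * ((q : ℝ) - p) * (1 / a - 1 / b) := by
    intro a b ha hab p q hpq
    have hb := ha.trans hab
    have h3 : 0 < 1 / a - 1 / b := sub_pos.2 (one_div_lt_one_div_of_lt ha hab)
    have h2 : (0:ℝ) < (q : ℝ) - p := sub_pos.2 (by exact_mod_cast hpq)
    have h1 : 0 < a ^ p * b ^ q - a ^ q * b ^ p := by
      obtain ⟨d, rfl⟩ := Nat.exists_eq_add_of_lt hpq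
      have : a ^ (d+1) < b ^ (d+1) := pow_lt_pow_left₀ hab ha.le (by omega)
      have e : a ^ p * b ^ (p + d + 1) - a ^ (p + d + 1) * b ^ p
        = (a ^ p * b ^ p) * (b ^ (d+1) - a ^ (d+1)) := by ring
      rw [e]
      have := sub_pos.2 this
      positivity
    positivity
  have key2 : ∀ a b : ℝ, 0 < a → a < b → ∀ p q : ℕ, p ≠ q →
      0 < (a ^ p * b ^ q - a ^ q * b ^ p) * ((q : ℝ) - p) * (1 / a - 1 / b) := by
    intro a b ha hab p q hpq
    rcases lt_or_gt_of_ne hpq with h | h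
    · exact key a b ha hab p q h
    · have := key a b ha hab q p h
      linarith
  have st : a ≠ b → p ≠ q → 0 < (a ^ p * b ^ q - a ^ q * b ^ p) * ((q : ℝ) - p) * (1 / a - 1 / b) := by
    intro h1 h2
    rcases lt_or_gt_of_ne h1 with h | h
    · exact key2 a b ha h p q h2
    · have := key2 b a hb h p q h2
      linarith
  refine ⟨?_, st⟩
  by_cases h1 : a = b
  · subst h1; simp
  by_cases h2 : p = q
  · subst h2; simp
  exact (st h1 h2).le

lemma vterm {N m : ℕ} (x : Fin N → ℝ) (hx : ∀ i, 0 < x i) (t : Fin m → Fin N) (i j : Fin N) :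
    0 ≤ (vP x t - vP x (vs i j t)) * (vc t j - vc t i) * (1 / x i - 1 / x j) ∧
    (x i ≠ x j → vc t i ≠ vc t j →
      0 < (vP x t - vP x (vs i j t)) * (vc t j - vc t i) * (1 / x i - 1 / x j)) := by
  by_cases hij : i = j
  · subst hij; simp
  set n : Fin N → ℕ := fun a => (Finset.univ.filter fun k => t k = a).card with hn
  have hvc : ∀ a, vc t a = n a := fun a => rfl
  have e1 : vP x t = (∏ a ∈ (Finset.univ.erase i).erase j, x a ^ n a) * (x i ^ n i * x j ^ n j) := by
    rw [vP_pow, ← Finset.mul_prod_erase _ _ (Finset.mem_univ i),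
      ← Finset.mul_prod_erase (Finset.univ.erase i) _ (Finset.mem_erase.2 ⟨Ne.symm hij, Finset.mem_univ j⟩)]
    ring
  have hs : ∀ a, (Finset.univ.filter fun k => vs i j t k = a).card = n (Equiv.swap i j a) := by
    intro a
    have := vs_vc i j t a
    unfold vc at this
    exact_mod_cast this
  have e2 : vP x (vs i j t)
      = (∏ a ∈ (Finset.univ.erase i).erase j, x a ^ n a) * (x i ^ n j * x j ^ n i) := by
    rw [vP_pow, ← Finset.mul_prod_erase _ _ (Finset.mem_univ i),
      ← Finset.mul_prod_erase (Finset.univ.erase i) _ (Finset.mem_erase.2 ⟨Ne.symm hij, Finset.mem_univ j⟩)]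
    simp only [hs, Equiv.swap_apply_left, Equiv.swap_apply_right]
    have : ∏ a ∈ (Finset.univ.erase i).erase j, x a ^ n (Equiv.swap i j a)
       = ∏ a ∈ (Finset.univ.erase i).erase j, x a ^ n a := by
      refine Finset.prod_congr rfl fun a ha => ?_
      rw [Equiv.swap_apply_of_ne_of_ne]
      · exact Finset.ne_of_mem_erase (Finset.mem_of_mem_erase ha)
      · exact Finset.ne_of_mem_erase ha
    rw [this]; ring
  have hR : 0 < ∏ a ∈ (Finset.univ.erase i).erase j, x a ^ n a :=
    Finset.prod_pos fun a _ => pow_pos (hx a) _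
  have := vpow_aux (x i) (x j) (hx i) (hx j) (n i) (n j)
  have e3 : (vP x t - vP x (vs i j t)) * (vc t j - vc t i) * (1 / x i - 1 / x j)
    = (∏ a ∈ (Finset.univ.erase i).erase j, x a ^ n a) *
      ((x i ^ n i * x j ^ n j - x i ^ n j * x j ^ n i) * ((n j : ℝ) - n i) * (1 / x i - 1 / x j)) := by
    rw [e1, e2, hvc, hvc]; ring
  rw [e3]
  refine ⟨mul_nonneg hR.le this.1, fun h1 h2 => mul_pos hR (this.2 h1 ?_)⟩
  intro h; apply h2; rw [hvc, hvc, h]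

lemma ve_nonneg {N m : ℕ} (t : Fin m → Fin N) (i j : Fin N) : 0 ≤ ve t i j := by
  unfold ve; split_ifs <;> positivity

lemma ve_comm {N m : ℕ} (t : Fin m → Fin N) (i j : Fin N) : ve t i j = ve t j i := by
  unfold ve; exact if_congr and_comm rfl rfl

lemma vG_eq {N m : ℕ} (hm : 3 ≤ m) (x : Fin N → ℝ) (hx : ∀ i, 0 < x i) (hs : ∑ i, x i = 1) :
    vG m x = ∑ i, ∑ j, (∑ t : Fin m → Fin N, vP x t * ve t i j * (vc t j - vc t i)) * (1 / x i) := by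
  have h1 : ∀ t : Fin m → Fin N, ∑ a, vh x t a * (vP x t * vw t a)
      = ∑ i, (vP x t * vc t i + vP x t * (m * vw t i)) * (1 / x i) := by
    intro t
    unfold vh
    simp_rw [Finset.sum_mul]
    rw [Finset.sum_comm]
    refine Finset.sum_congr rfl fun i _ => ?_
    have : ∀ a, (vc t i + m * (if a = i then (1 : ℝ) else 0)) / x i * (vP x t * vw t a)
      = vc t i * vP x t * (1 / x i) * vw t a + (if a = i then m * vP x t * (1 / x i) * vw t a else 0) := by
      intro a; split_ifs <;> ring
    rw [Finset.sum_congr rfl fun a _ => this a, Finset.sum_add_distrib, ← Finset.mul_sum, vw_sum hm]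
    simp
    ring
  unfold vG
  rw [Finset.sum_congr rfl fun t _ => h1 t, Finset.sum_comm]
  have h2 : (2 * m * N : ℝ) = ∑ i : Fin N, 2 * (m : ℝ) := by simp; ring
  rw [h2, ← Finset.sum_sub_distrib]
  refine Finset.sum_congr rfl fun i _ => ?_
  rw [← Finset.sum_mul, ← Finset.sum_mul, Finset.sum_comm]
  have h3 : ∑ t : Fin m → Fin N, ∑ j, vP x t * ve t i j * (vc t j - vc t i)
      = ∑ t : Fin m → Fin N, (vP x t * vc t i + vP x t * (m * vw t i))
        - 2 * ∑ t : Fin m → Fin N, vP x t * vc t i := by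
    rw [Finset.mul_sum, ← Finset.sum_sub_distrib]
    refine Finset.sum_congr rfl fun t _ => ?_
    simp_rw [mul_assoc]
    rw [← Finset.mul_sum, ← vw_sub hm]
    ring
  rw [h3, vP_c x hs]
  have := (hx i).ne'
  field_simp

lemma vG_four {N m : ℕ} (hm : 3 ≤ m) (x : Fin N → ℝ) (hx : ∀ i, 0 < x i) (hs : ∑ i, x i = 1) :
    4 * vG m x = ∑ i, ∑ j, ∑ t : Fin m → Fin N,
      ve t i j * ((vP x t - vP x (vs i j t)) * (vc t j - vc t i) * (1 / x i - 1 / x j)) := by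
  set B : Fin N → Fin N → ℝ := fun i j =>
    ∑ t : Fin m → Fin N, vP x t * ve t i j * (vc t j - vc t i) with hB
  have hG : vG m x = ∑ i, ∑ j, B i j * (1 / x i) := vG_eq hm x hx hs
  have hanti : ∀ i j, B j i = - B i j := by
    intro i j
    simp only [hB]
    rw [← Finset.sum_neg_distrib]
    refine Finset.sum_congr rfl fun t _ => ?_
    rw [ve_comm t j i]; ring
  have hG2 : vG m x = ∑ i, ∑ j, B i j * (- (1 / x j)) := by
    rw [hG, Finset.sum_comm]
    refine Finset.sum_congr rfl fun i _ => Finset.sum_congr rfl fun j _ => ?_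
    rw [hanti i j]; ring
  have hB2 : ∀ i j, 2 * B i j = ∑ t : Fin m → Fin N,
      ve t i j * ((vP x t - vP x (vs i j t)) * (vc t j - vc t i)) := by
    intro i j
    have h1 : B i j = ∑ t : Fin m → Fin N, vP x (vs i j t) * ve t i j * (vc t i - vc t j) := by
      simp only [hB]
      rw [← Equiv.sum_comp (vsE m i j)]
      refine Finset.sum_congr rfl fun t _ => ?_
      change vP x (vs i j t) * ve (vs i j t) i j * (vc (vs i j t) j - vc (vs i j t) i) = _
      rw [vs_ve, vs_vc, vs_vc, Equiv.swap_apply_left, Equiv.swap_apply_right]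
    rw [two_mul]
    nth_rewrite 2 [h1]
    simp only [hB]
    rw [← Finset.sum_add_distrib]
    refine Finset.sum_congr rfl fun t _ => ?_
    ring
  have : 4 * vG m x = ∑ i, ∑ j, (2 * B i j) * (1 / x i - 1 / x j) := by
    have h0 : 4 * vG m x = 2 * (vG m x + vG m x) := by ring
    rw [h0]
    nth_rewrite 1 [hG]
    rw [hG2, ← Finset.sum_add_distrib, Finset.mul_sum]
    refine Finset.sum_congr rfl fun i _ => ?_
    rw [← Finset.sum_add_distrib, Finset.mul_sum]
    refine Finset.sum_congr rfl fun j _ => ?_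
    ring
  rw [this]
  refine Finset.sum_congr rfl fun i _ => Finset.sum_congr rfl fun j _ => ?_
  rw [hB2, Finset.sum_mul]
  refine Finset.sum_congr rfl fun t _ => ?_
  ring

lemma vG_nonneg {N m : ℕ} (hm : 3 ≤ m) (x : Fin N → ℝ) (hx : ∀ i, 0 < x i) (hs : ∑ i, x i = 1) :
    0 ≤ vG m x := by
  have h := vG_four hm x hx hs
  have : 0 ≤ 4 * vG m x := by
    rw [h]
    exact Finset.sum_nonneg fun i _ => Finset.sum_nonneg fun j _ => Finset.sum_nonneg fun t _ =>
      mul_nonneg (ve_nonneg _ _ _) (vterm x hx t i j).1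
  linarith

lemma vG_pos {N m : ℕ} (hm : 3 ≤ m) (x : Fin N → ℝ) (hx : ∀ i, 0 < x i) (hs : ∑ i, x i = 1)
    (i j : Fin N) (hij : x i ≠ x j) : 0 < vG m x := by
  have h := vG_four hm x hx hs
  have nn : ∀ i j (t : Fin m → Fin N), 0 ≤
      ve t i j * ((vP x t - vP x (vs i j t)) * (vc t j - vc t i) * (1 / x i - 1 / x j)) :=
    fun i j t => mul_nonneg (ve_nonneg _ _ _) (vterm x hx t i j).1
  have hne : i ≠ j := fun h => hij (by rw [h])
  have : 0 < 4 * vG m x := by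
    rw [h]
    refine Finset.sum_pos' (fun i _ => Finset.sum_nonneg fun j _ => Finset.sum_nonneg fun t _ => nn i j t)
      ⟨i, Finset.mem_univ _, ?_⟩
    refine Finset.sum_pos' (fun j _ => Finset.sum_nonneg fun t _ => nn i j t)
      ⟨j, Finset.mem_univ _, ?_⟩
    set k0 : Fin m := ⟨0, by omega⟩
    set k1 : Fin m := ⟨1, by omega⟩
    set k2 : Fin m := ⟨2, by omega⟩
    set t : Fin m → Fin N := fun k => if k = k0 then i else j with ht
    have h01 : k1 ≠ k0 := by simp [k0, k1]
    have h02 : k2 ≠ k0 := by simp [k0, k2]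
    have h12 : k1 ≠ k2 := by simp [k1, k2]
    refine Finset.sum_pos' (fun t _ => nn i j t) ⟨t, Finset.mem_univ _, ?_⟩
    refine mul_pos ?_ ((vterm x hx t i j).2 hij ?_)
    · unfold ve
      rw [if_pos]
      · exact one_div_pos.2 (vimg_pos hm t)
      · exact ⟨Finset.mem_image.2 ⟨k0, Finset.mem_univ _, by simp [ht]⟩,
          Finset.mem_image.2 ⟨k1, Finset.mem_univ _, by simp [ht, h01]⟩⟩
    · have e1 : (Finset.univ.filter fun k => t k = i) = {k0} := by
        ext k
        simp only [Finset.mem_filter, Finset.mem_univ, true_and, Finset.mem_singleton, ht]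
        constructor
        · intro h; by_contra hk; rw [if_neg hk] at h; exact hne h.symm
        · intro h; rw [if_pos h]
      have e2 : ({k1, k2} : Finset (Fin m)) ⊆ (Finset.univ.filter fun k => t k = j) := by
        intro k hk
        simp only [Finset.mem_insert, Finset.mem_singleton] at hk
        rcases hk with rfl | rfl
        · simp [ht, h01]
        · simp [ht, h02]
      have e3 := Finset.card_le_card e2
      rw [Finset.card_pair h12] at e3
      unfold vc
      rw [e1, Finset.card_singleton]
      intro h
      have : 1 = (Finset.univ.filter fun k => t k = j).card := by exact_mod_cast h
      omega
  linarith

def vU {N : ℕ} (x : Fin N → ℝ) : ℝ := ∑ i, - Real.log (x i)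

lemma vG_contOn {N m : ℕ} : ContinuousOn (vG (N := N) m) {x | ∀ i, 0 < x i} := by
  have hc : ∀ i : Fin N, ContinuousOn (fun x : Fin N → ℝ => x i) {x | ∀ i, 0 < x i} :=
    fun i => (continuous_apply i).continuousOn
  unfold vG vh vP
  refine ContinuousOn.sub ?_ continuousOn_const
  refine continuousOn_finsetSum _ fun t _ => continuousOn_finsetSum _ fun a _ => ?_
  refine ContinuousOn.mul (continuousOn_finsetSum _ fun i _ => ?_) (ContinuousOn.mul ?_ continuousOn_const)
  · exact continuousOn_const.div (hc i) fun x hx => (hx i).ne'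
  · exact continuousOn_finsetProd _ fun j _ => hc _

lemma vU_contOn {N : ℕ} : ContinuousOn (vU (N := N)) {x | ∀ i, 0 < x i} := by
  unfold vU
  refine continuousOn_finsetSum _ fun i _ => ContinuousOn.neg ?_
  exact ContinuousOn.log (continuous_apply i).continuousOn fun x hx => (hx i).ne'

lemma vU_unif {N : ℕ} (hN : 2 ≤ N) (x : Fin N → ℝ) (hx : ∀ i, 0 < x i) (hs : ∑ i, x i = 1)
    (h : vU x = N * Real.log N) (i : Fin N) : x i = 1 / N := by
  have hN0 : (0 : ℝ) < N := by exact_mod_cast (by omega : 0 < N)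
  have hnn : ∀ i ∈ Finset.univ, 0 ≤ (N * x i - 1 - Real.log (N * x i)) := fun i _ => by
    have := Real.log_le_sub_one_of_pos (mul_pos hN0 (hx i)); linarith
  have hsum : ∑ i, (N * x i - 1 - Real.log (N * x i)) = 0 := by
    have : ∀ i, (N * x i - 1 - Real.log (N * x i)) = N * x i - (1 + Real.log N) + - Real.log (x i) := by
      intro i; rw [Real.log_mul hN0.ne' (hx i).ne']; ring
    rw [Finset.sum_congr rfl fun i _ => this i, Finset.sum_add_distrib, Finset.sum_sub_distrib,
      ← Finset.mul_sum, hs]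
    change _ + vU x = 0
    rw [h]; simp
  have h0 := (Finset.sum_eq_zero_iff_of_nonneg hnn).1 hsum i (Finset.mem_univ i)
  by_contra hne
  have : N * x i ≠ 1 := by
    intro h; apply hne; rw [eq_div_iff hN0.ne', mul_comm]; exact h
  have := Real.log_lt_sub_one_of_pos (mul_pos hN0 (hx i)) this
  linarith

lemma vdet {N m : ℕ} (hN : 2 ≤ N) (hm : 3 ≤ m) (γ : ℕ → ℝ) (hγ : ∀ n, 0 < γ n)
    (hdiv : ¬ Summable fun n => 1 / γ n) (x : ℕ → Fin N → ℝ) (hx : ∀ n i, 0 < x n i)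
    (hs : ∀ n, ∑ i, x n i = 1) (L : ℝ) (hU : Tendsto (fun n => vU (x n)) atTop (𝓝 L))
    (hG : Summable fun n => vG m (x n) / γ n) :
    ∀ i, Tendsto (fun n => x n i) atTop (𝓝 (1 / (N : ℝ))) := by
  have hle : ∀ n i, x n i ≤ 1 := fun n i => by
    rw [← hs n]; exact Finset.single_le_sum (f := x n) (fun j _ => (hx n j).le) (Finset.mem_univ i)
  obtain ⟨B, hB⟩ := hU.bddAbove_range
  have hB' : ∀ n, vU (x n) ≤ B := fun n => hB ⟨n, rfl⟩
  have hlow : ∀ n i, Real.exp (-B) ≤ x n i := by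
    intro n i
    have h1 : - Real.log (x n i) ≤ vU (x n) :=
      Finset.single_le_sum (f := fun i => - Real.log (x n i))
        (fun j _ => by have := Real.log_nonpos (hx n j).le (hle n j); linarith)
        (Finset.mem_univ i)
    rw [← Real.le_log_iff_exp_le (hx n i)]
    linarith [hB' n]
  set K : Set (Fin N → ℝ) := Set.Icc (fun _ => Real.exp (-B)) (fun _ => 1) ∩ {y | ∑ i, y i = 1} with hK
  have hKc : IsCompact K := isCompact_Icc.inter_right
    (isClosed_eq (continuous_finsetSum _ fun i _ => continuous_apply i) continuous_const)
  have hxK : ∀ n, x n ∈ K := fun n => ⟨⟨fun i => hlow n i, fun i => hle n i⟩, hs n⟩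
  have hKpos : K ⊆ {y | ∀ i, 0 < y i} := fun y hy i => (Real.exp_pos _).trans_le (hy.1.1 i)
  set u : Fin N → ℝ := fun _ => 1 / N with hu
  have hL : L = N * Real.log N := by
    by_contra hne
    set d := |L - N * Real.log N| / 2 with hd
    have hd0 : 0 < d := by
      have := abs_pos.2 (sub_ne_zero.2 hne); positivity
    set K' := K ∩ vU ⁻¹' (Metric.closedBall L d) with hK'
    have hK'c : IsCompact K' := by
      refine hKc.of_isClosed_subset ?_ Set.inter_subset_left
      exact (vU_contOn.mono hKpos).preimage_isClosed_of_isClosed hKc.isClosed Metric.isClosed_closedBall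
    have hev : ∀ᶠ n in atTop, x n ∈ K' := by
      filter_upwards [hU (Metric.closedBall_mem_nhds L hd0)] with n hn using ⟨hxK n, hn⟩
    obtain ⟨n0, hn0⟩ := hev.exists
    obtain ⟨y, hy, hmin⟩ := hK'c.exists_isMinOn ⟨_, hn0⟩
      (vG_contOn (m := m) |>.mono (Set.inter_subset_left.trans hKpos))
    have hypos : ∀ i, 0 < y i := hKpos hy.1
    have hGy : 0 < vG m y := by
      by_contra hcon
      have hall : ∀ i j, y i = y j := by
        intro i j
        by_contra hij
        exact hcon (vG_pos hm y hypos hy.1.2 i j hij)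
      have hN0 : (0 : ℝ) < N := by exact_mod_cast (by omega : 0 < N)
      have hyu : ∀ i, y i = 1 / N := by
        intro i
        have h1 : ∑ j, y j = 1 := hy.1.2
        rw [Finset.sum_congr rfl fun j _ => hall j i] at h1
        simp at h1
        rw [eq_div_iff hN0.ne']; linarith
      have hUy : vU y = N * Real.log N := by
        unfold vU
        simp [hyu]
      have := hy.2
      simp only [Set.mem_preimage, Metric.mem_closedBall, Real.dist_eq, hUy] at this
      rw [abs_sub_comm] at this
      rw [hd] at this
      have := abs_pos.2 (sub_ne_zero.2 hne)
      linarith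
    apply hdiv
    have hs1 : Summable fun n => (1 / γ n) * vG m y := by
      refine Summable.of_norm_bounded_eventually_nat hG ?_
      filter_upwards [hev] with n hn
      have h1 : vG m y ≤ vG m (x n) := hmin hn
      have := hγ n
      rw [Real.norm_of_nonneg (by positivity), div_mul_eq_mul_div, one_mul]
      gcongr
    exact (summable_mul_right_iff hGy.ne').1 hs1
  have hlim : Tendsto x atTop (𝓝 u) := by
    refine hKc.tendsto_nhds_of_unique_mapClusterPt (Eventually.of_forall hxK) ?_
    intro y hyK hy
    have hypos : ∀ i, 0 < y i := hKpos hyK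
    have hyc : ContinuousAt (vU (N := N)) y := by
      refine vU_contOn.continuousAt ?_
      have : {x : Fin N → ℝ | ∀ i, 0 < x i} = ⋂ i, {x | 0 < x i} := by ext; simp
      rw [this]
      exact (isOpen_iInter_of_finite fun i =>
        isOpen_lt continuous_const (continuous_apply i)).mem_nhds (by simpa using hypos)
    have hcl : MapClusterPt (vU y) atTop (fun n => vU (x n)) := hy.continuousAt_comp hyc
    have : vU y = L := by
      by_contra hne
      have h2 : MapClusterPt (vU y) atTop (fun n => vU (x n)) := hcl
      have : ClusterPt (vU y) (𝓝 L) := ClusterPt.mono h2 hU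
      exact this.neBot.ne (disjoint_iff.1 (disjoint_nhds_nhds.2 hne))
    funext i
    exact vU_unif hN y hypos hyK.2 (this.trans hL) i
  intro i
  exact (tendsto_pi_nhds.1 hlim) i

lemma vstep_real (Z D m : ℝ) (hZ : 0 < Z) (hD : 0 ≤ D) (hDm : D ≤ 2 * m) :
    - Real.log (Z + D) + 2 * m / (Z + D) ≤ - Real.log Z + 2 * m / Z - D / Z := by
  have hZD : 0 < Z + D := by linarith
  have h1 := Real.one_sub_inv_le_log_of_pos (div_pos hZD hZ)
  rw [Real.log_div hZD.ne' hZ.ne', inv_div] at h1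
  have h2 : 2 * m / Z - 2 * m / (Z + D) - (D / Z - (1 - Z / (Z + D)))
      = D * (2 * m - D) / (Z * (Z + D)) := by
    field_simp; ring
  have h3 : 0 ≤ D * (2 * m - D) / (Z * (Z + D)) :=
    div_nonneg (mul_nonneg hD (by linarith)) (by positivity)
  linarith

def vr {N : ℕ} (x : Fin N → ℝ) : ℝ := ∑ i, 1 / x i

lemma vr_contOn {N : ℕ} : ContinuousOn (vr (N := N)) {x | ∀ i, 0 < x i} := by
  unfold vr
  refine continuousOn_finsetSum _ fun i _ => ?_
  exact continuousOn_const.div (continuous_apply i).continuousOn fun x hx => (hx i).ne'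

lemma vh_contOn {N m : ℕ} (t : Fin m → Fin N) (a : Fin N) :
    ContinuousOn (fun x => vh x t a) {x | ∀ i, 0 < x i} := by
  unfold vh
  refine continuousOn_finsetSum _ fun i _ => ?_
  exact continuousOn_const.div (continuous_apply i).continuousOn fun x hx => (hx i).ne'

lemma vh_meas {N m : ℕ} (t : Fin m → Fin N) (a : Fin N) : Measurable (fun x => vh x t a) := by
  unfold vh; fun_prop
lemma vr_meas {N : ℕ} : Measurable (vr (N := N)) := by unfold vr; fun_prop
lemma vU_meas {N : ℕ} : Measurable (vU (N := N)) := by unfold vU; fun_prop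
lemma vG_meas {N m : ℕ} : Measurable (vG (N := N) m) := by
  unfold vG vh vP; fun_prop

section
variable {Ω : Type*} [MeasurableSpace Ω] {μ : Measure Ω} [IsProbabilityMeasure μ]
    {N m : ℕ} {γ₀ : ℝ}

lemma visGamma_pos (hγ₀ : 2 ≤ γ₀) (n : ℕ) : 0 < visGamma γ₀ m n := by
  unfold visGamma; positivity

lemma visGamma_succ (n : ℕ) : visGamma γ₀ m (n+1) = visGamma γ₀ m n + 2 * m := by
  unfold visGamma; push_cast; ring

def VisChain.X (c : VisChain μ N m γ₀) (n : ℕ) (ω : Ω) : Fin N → ℝ := fun i => c.x n i ω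

def VisChain.D (c : VisChain μ N m γ₀) (n : ℕ) (i : Fin N) (ω : Ω) : ℝ :=
  vc (c.T (n+1) ω) i + m * (if c.τ (n + 1) ω = i then (1 : ℝ) else 0)

lemma vc_nonneg (t : Fin m → Fin N) (i : Fin N) : 0 ≤ vc t i := by unfold vc; positivity

lemma vc_le (t : Fin m → Fin N) (i : Fin N) : vc t i ≤ m := by
  rw [← vc_sum t]
  exact Finset.single_le_sum (f := vc t) (fun j _ => vc_nonneg t j) (Finset.mem_univ i)

lemma D_nonneg (c : VisChain μ N m γ₀) (n : ℕ) (i : Fin N) (ω : Ω) : 0 ≤ c.D n i ω := by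
  unfold VisChain.D
  have := vc_nonneg (c.T (n+1) ω) i
  positivity

lemma D_le (c : VisChain μ N m γ₀) (n : ℕ) (i : Fin N) (ω : Ω) : c.D n i ω ≤ 2 * m := by
  unfold VisChain.D
  have := vc_le (c.T (n+1) ω) i
  have hm : (0:ℝ) ≤ m := by positivity
  split_ifs <;> linarith

lemma Z_succ (hγ₀ : 2 ≤ γ₀) (c : VisChain μ N m γ₀) (n : ℕ) (i : Fin N) (ω : Ω) :
    visGamma γ₀ m (n+1) * c.x (n+1) i ω = visGamma γ₀ m n * c.x n i ω + c.D n i ω := by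
  have := visGamma_pos (m := m) hγ₀ (n+1)
  rw [c.update n i ω, mul_div_cancel₀ _ this.ne']
  unfold VisChain.D vc
  ring

lemma Z_low (hγ₀ : 2 ≤ γ₀) (c : VisChain μ N m γ₀) (n : ℕ) (i : Fin N) (ω : Ω) :
    γ₀ * c.x 0 i ω ≤ visGamma γ₀ m n * c.x n i ω := by
  induction n with
  | zero => simp [visGamma]
  | succ n ih => rw [Z_succ hγ₀]; linarith [D_nonneg c n i ω]

lemma x_pos (hγ₀ : 2 ≤ γ₀) (c : VisChain μ N m γ₀) (n : ℕ) (i : Fin N) (ω : Ω) :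
    0 < c.x n i ω := by
  have h1 := Z_low hγ₀ c n i ω
  have h2 := mul_pos (by linarith : 0 < γ₀) (c.init_pos i ω)
  exact pos_of_mul_pos_right (h2.trans_le h1) (visGamma_pos hγ₀ n).le

lemma x_le (c : VisChain μ N m γ₀) (n : ℕ) (i : Fin N) (ω : Ω) : c.x n i ω ≤ 1 := by
  rw [← c.sum_eq_one n ω]
  exact Finset.single_le_sum (f := fun i => c.x n i ω) (fun j _ => c.nonneg n j ω) (Finset.mem_univ i)

lemma X_meas (c : VisChain μ N m γ₀) (n : ℕ) : Measurable[c.F n] (c.X n) :=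
  @measurable_pi_lambda _ _ _ (c.F n) _ _ fun i => c.adapted_x i n

lemma f_bdd (hγ₀ : 2 ≤ γ₀) (c : VisChain μ N m γ₀) (n : ℕ) (f : (Fin N → ℝ) → ℝ)
    (hf : ContinuousOn f {x | ∀ i, 0 < x i}) : ∃ C, ∀ ω, ‖f (c.X n ω)‖ ≤ C := by
  rcases isEmpty_or_nonempty Ω with h | ⟨⟨ω₀⟩⟩
  · exact ⟨0, fun ω => (h.false ω).elim⟩
  have hg := visGamma_pos (m := m) hγ₀ n
  have hK : IsCompact (Set.Icc (fun i => γ₀ * c.x 0 i ω₀ / visGamma γ₀ m n) (fun _ : Fin N => (1:ℝ))) :=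
    isCompact_Icc
  have hsub : (Set.Icc (fun i => γ₀ * c.x 0 i ω₀ / visGamma γ₀ m n) (fun _ : Fin N => (1:ℝ)))
      ⊆ {x | ∀ i, 0 < x i} := by
    intro y hy i
    have h2 := mul_pos (by linarith : 0 < γ₀) (c.init_pos i ω₀)
    exact (div_pos h2 hg).trans_le (hy.1 i)
  obtain ⟨C, hC⟩ := hK.exists_bound_of_continuousOn (hf.mono hsub)
  refine ⟨C, fun ω => hC _ ⟨fun i => ?_, fun i => x_le c n i ω⟩⟩
  have := Z_low hγ₀ c n i ω
  rw [c.init_const i ω ω₀] at this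
  change _ / _ ≤ c.x n i ω
  rw [div_le_iff₀ hg, mul_comm _ (visGamma γ₀ m n)]
  exact this

lemma f_sm (c : VisChain μ N m γ₀) (n : ℕ) (f : (Fin N → ℝ) → ℝ) (hfm : Measurable f) :
    StronglyMeasurable[c.F n] (fun ω => f (c.X n ω)) :=
  (hfm.comp (X_meas c n)).stronglyMeasurable

lemma f_int (hγ₀ : 2 ≤ γ₀) (c : VisChain μ N m γ₀) (n : ℕ) (f : (Fin N → ℝ) → ℝ)
    (hf : ContinuousOn f {x | ∀ i, 0 < x i}) (hfm : Measurable f) :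
    Integrable (fun ω => f (c.X n ω)) μ := by
  obtain ⟨C, hC⟩ := f_bdd hγ₀ c n f hf
  exact Integrable.of_bound ((f_sm c n f hfm).mono (c.F.le n)).aestronglyMeasurable C
    (Eventually.of_forall hC)

def VisChain.I (c : VisChain μ N m γ₀) (n : ℕ) (t : Fin m → Fin N) (a : Fin N) : Ω → ℝ :=
  Set.indicator {ω | c.T (n + 1) ω = t ∧ c.τ (n + 1) ω = a} (fun _ => (1 : ℝ))

def VisChain.H (c : VisChain μ N m γ₀) (n : ℕ) : Ω → ℝ :=
  ∑ p : (Fin m → Fin N) × Fin N, (fun ω => vh (c.X n ω) p.1 p.2) * c.I n p.1 p.2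

lemma I_int (c : VisChain μ N m γ₀) (n : ℕ) (t : Fin m → Fin N) (a : Fin N) :
    Integrable (c.I n t a) μ := by
  refine (integrable_const (1:ℝ)).indicator ?_
  have h1 : MeasurableSet {ω | c.T (n+1) ω = t} :=
    ((c.meas_T n).mono (c.F.le _) le_rfl) (measurableSet_singleton t)
  have h2 : MeasurableSet {ω | c.τ (n+1) ω = a} :=
    ((c.meas_τ n).mono (c.F.le _) le_rfl) (measurableSet_singleton a)
  exact h1.inter h2

lemma hI_int (hγ₀ : 2 ≤ γ₀) (c : VisChain μ N m γ₀) (n : ℕ) (t : Fin m → Fin N) (a : Fin N) :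
    Integrable ((fun ω => vh (c.X n ω) t a) * c.I n t a) μ := by
  obtain ⟨C, hC⟩ := f_bdd hγ₀ c n _ (vh_contOn t a)
  exact (I_int c n t a).bdd_mul
    (((f_sm c n _ (vh_meas t a)).mono (c.F.le n)).aestronglyMeasurable) (Eventually.of_forall hC)

lemma H_int (hγ₀ : 2 ≤ γ₀) (c : VisChain μ N m γ₀) (n : ℕ) : Integrable (c.H n) μ :=
  integrable_finsetSum' _ fun p _ => hI_int hγ₀ c n p.1 p.2

lemma H_apply (c : VisChain μ N m γ₀) (n : ℕ) (ω : Ω) :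
    c.H n ω = ∑ i, c.D n i ω / c.x n i ω := by
  unfold VisChain.H
  rw [Finset.sum_apply, Finset.sum_eq_single (c.T (n+1) ω, c.τ (n+1) ω)]
  · simp only [Pi.mul_apply, VisChain.I]
    rw [Set.indicator_of_mem (by simp)]
    simp [vh, VisChain.D, VisChain.X]
  · intro p _ hp
    simp only [Pi.mul_apply, VisChain.I]
    rw [Set.indicator_of_notMem, mul_zero]
    rintro ⟨h1, h2⟩
    exact hp (by rw [h1, h2])
  · simp

lemma H_cond (hγ₀ : 2 ≤ γ₀) (c : VisChain μ N m γ₀) (n : ℕ) :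
    μ[c.H n | c.F n] =ᵐ[μ] fun ω => vG m (c.X n ω) + 2 * m * N := by
  have h1 : μ[c.H n | c.F n] =ᵐ[μ] ∑ p : (Fin m → Fin N) × Fin N,
      μ[(fun ω => vh (c.X n ω) p.1 p.2) * c.I n p.1 p.2 | c.F n] :=
    condExp_finsetSum (fun p _ => hI_int hγ₀ c n p.1 p.2) _
  have h2 : ∀ p : (Fin m → Fin N) × Fin N,
      μ[(fun ω => vh (c.X n ω) p.1 p.2) * c.I n p.1 p.2 | c.F n] =ᵐ[μ]
        fun ω => vh (c.X n ω) p.1 p.2 * (vP (c.X n ω) p.1 * vw p.1 p.2) := by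
    intro p
    have h3 := condExp_mul_of_stronglyMeasurable_left (f_sm c n _ (vh_meas p.1 p.2))
      (hI_int hγ₀ c n p.1 p.2) (I_int c n p.1 p.2)
    have h4 := c.step_law n p.1 p.2
    filter_upwards [h3, h4] with ω h5 h6
    rw [h5, Pi.mul_apply]
    congr 1
  filter_upwards [h1, ae_all_iff.2 h2] with ω h3 h4
  rw [h3, Finset.sum_apply, Finset.sum_congr rfl fun p _ => h4 p, Fintype.sum_prod_type]
  unfold vG
  ring

def VisChain.M (c : VisChain μ N m γ₀) (n : ℕ) : Ω → ℝ := fun ω =>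
  (vU (c.X n ω) + 2 * m / visGamma γ₀ m n * vr (c.X n ω))
    + ∑ k ∈ Finset.range n, vG m (c.X k ω) / visGamma γ₀ m k

lemma M_sm (c : VisChain μ N m γ₀) (n : ℕ) : StronglyMeasurable[c.F n] (c.M n) := by
  unfold VisChain.M
  refine ((f_sm c n _ vU_meas).add ((f_sm c n _ vr_meas).const_mul _)).add ?_
  refine Finset.stronglyMeasurable_fun_sum _ fun k hk => ?_
  exact (f_sm c k (fun y => vG m y / visGamma γ₀ m k) (vG_meas.div_const _)).mono (c.F.mono (Finset.mem_range.1 hk).le)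

lemma M_int (hγ₀ : 2 ≤ γ₀) (c : VisChain μ N m γ₀) (n : ℕ) : Integrable (c.M n) μ := by
  unfold VisChain.M
  refine ((f_int hγ₀ c n _ vU_contOn vU_meas).add
    ((f_int hγ₀ c n _ vr_contOn vr_meas).const_mul _)).add ?_
  refine integrable_finsetSum _ fun k hk => ?_
  exact (f_int hγ₀ c k _ vG_contOn vG_meas).div_const _

lemma M_step (hγ₀ : 2 ≤ γ₀) (c : VisChain μ N m γ₀) (n : ℕ) (ω : Ω) :
    c.M (n+1) ω ≤ c.M n ω + (vG m (c.X n ω) + 2 * m * N) / visGamma γ₀ m n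
      - (visGamma γ₀ m n)⁻¹ * c.H n ω := by
  have hg := visGamma_pos (m := m) hγ₀ n
  have hg' := visGamma_pos (m := m) hγ₀ (n+1)
  have hlog : Real.log (visGamma γ₀ m (n+1)) ≤ Real.log (visGamma γ₀ m n) + 2 * m / visGamma γ₀ m n := by
    have := Real.log_le_sub_one_of_pos (div_pos hg' hg)
    rw [Real.log_div hg'.ne' hg.ne'] at this
    have e : visGamma γ₀ m (n+1) / visGamma γ₀ m n - 1 = 2 * m / visGamma γ₀ m n := by
      rw [visGamma_succ]; field_simp; ring
    linarith
  have hi : ∀ i, - Real.log (c.x (n+1) i ω) + 2 * m / visGamma γ₀ m (n+1) * (1 / c.x (n+1) i ω)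
      ≤ - Real.log (c.x n i ω) + 2 * m / visGamma γ₀ m n * (1 / c.x n i ω)
        + 2 * m / visGamma γ₀ m n - (visGamma γ₀ m n)⁻¹ * (c.D n i ω / c.x n i ω) := by
    intro i
    have hx := x_pos hγ₀ c n i ω
    have hx' := x_pos hγ₀ c (n+1) i ω
    have h := vstep_real (visGamma γ₀ m n * c.x n i ω) (c.D n i ω) m (mul_pos hg hx)
      (D_nonneg c n i ω) (D_le c n i ω)
    rw [← Z_succ hγ₀, Real.log_mul hg.ne' hx.ne', Real.log_mul hg'.ne' hx'.ne'] at h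
    have e1 : 2 * m / visGamma γ₀ m (n+1) * (1 / c.x (n+1) i ω)
      = 2 * m / (visGamma γ₀ m (n+1) * c.x (n+1) i ω) := by field_simp
    have e2 : 2 * m / visGamma γ₀ m n * (1 / c.x n i ω)
      = 2 * m / (visGamma γ₀ m n * c.x n i ω) := by field_simp
    have e3 : (visGamma γ₀ m n)⁻¹ * (c.D n i ω / c.x n i ω)
      = c.D n i ω / (visGamma γ₀ m n * c.x n i ω) := by field_simp
    rw [e1, e2, e3]
    linarith
  have hsum := Finset.sum_le_sum fun i (_ : i ∈ Finset.univ) => hi i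
  rw [Finset.sum_sub_distrib, Finset.sum_add_distrib, Finset.sum_add_distrib, Finset.sum_add_distrib,
    ← Finset.mul_sum, ← Finset.mul_sum, ← Finset.mul_sum, ← H_apply] at hsum
  have e4 : ∑ _i : Fin N, 2 * (m:ℝ) / visGamma γ₀ m n = 2 * m * N / visGamma γ₀ m n := by
    simp; ring
  rw [e4] at hsum
  unfold VisChain.M
  rw [Finset.sum_range_succ, add_div]
  change vU (c.X (n+1) ω) + 2 * m / visGamma γ₀ m (n+1) * vr (c.X (n+1) ω) ≤
    vU (c.X n ω) + 2 * m / visGamma γ₀ m n * vr (c.X n ω) + 2 * m * N / visGamma γ₀ m n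
      - (visGamma γ₀ m n)⁻¹ * c.H n ω at hsum
  linarith

lemma M_super (hγ₀ : 2 ≤ γ₀) (c : VisChain μ N m γ₀) : Supermartingale c.M c.F μ := by
  refine supermartingale_nat (M_sm c) (M_int hγ₀ c) fun n => ?_
  set A : Ω → ℝ := fun ω => c.M n ω + (vG m (c.X n ω) + 2 * m * N) / visGamma γ₀ m n with hA
  have hAs : StronglyMeasurable[c.F n] A :=
    (M_sm c n).add (f_sm c n (fun y => (vG m y + 2 * m * N) / visGamma γ₀ m n)
      ((vG_meas.add_const _).div_const _))
  have hAi : Integrable A μ :=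
    (M_int hγ₀ c n).add (((f_int hγ₀ c n _ vG_contOn vG_meas).add (integrable_const _)).div_const _)
  have hHi : Integrable ((visGamma γ₀ m n)⁻¹ • c.H n) μ := (H_int hγ₀ c n).smul _
  have h1 : μ[c.M (n+1) | c.F n] ≤ᵐ[μ] μ[A - (visGamma γ₀ m n)⁻¹ • c.H n | c.F n] :=
    condExp_mono (M_int hγ₀ c (n+1)) (hAi.sub hHi) (Eventually.of_forall fun ω => M_step hγ₀ c n ω)
  have h2 := condExp_sub (m := c.F n) hAi hHi
  have h3 := condExp_smul (μ := μ) (visGamma γ₀ m n)⁻¹ (c.H n) (c.F n)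
  have h4 := condExp_of_stronglyMeasurable (c.F.le n) hAs hAi
  filter_upwards [h1, h2, h3, H_cond hγ₀ c n] with ω k1 k2 k3 k4
  rw [k2, Pi.sub_apply, k3, h4, Pi.smul_apply, k4] at k1
  simp only [hA, smul_eq_mul] at k1
  rw [div_eq_inv_mul] at k1
  linarith

lemma V_nonneg (hγ₀ : 2 ≤ γ₀) (c : VisChain μ N m γ₀) (n : ℕ) (ω : Ω) :
    0 ≤ vU (c.X n ω) + 2 * m / visGamma γ₀ m n * vr (c.X n ω) := by
  have hg := visGamma_pos (m := m) hγ₀ n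
  have h1 : 0 ≤ vU (c.X n ω) := Finset.sum_nonneg fun i _ => by
    have := Real.log_nonpos (c.nonneg n i ω) (x_le c n i ω)
    unfold VisChain.X; linarith
  have h2 : 0 ≤ vr (c.X n ω) := Finset.sum_nonneg fun i _ => one_div_nonneg.2 (c.nonneg n i ω)
  positivity

lemma GX_nonneg (hm : 3 ≤ m) (hγ₀ : 2 ≤ γ₀) (c : VisChain μ N m γ₀) (n : ℕ) (ω : Ω) :
    0 ≤ vG m (c.X n ω) / visGamma γ₀ m n :=
  div_nonneg (vG_nonneg hm _ (fun i => x_pos hγ₀ c n i ω) (c.sum_eq_one n ω)) (visGamma_pos hγ₀ n).le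

lemma M_nonneg (hm : 3 ≤ m) (hγ₀ : 2 ≤ γ₀) (c : VisChain μ N m γ₀) (n : ℕ) (ω : Ω) : 0 ≤ c.M n ω :=
  add_nonneg (V_nonneg hγ₀ c n ω) (Finset.sum_nonneg fun k _ => GX_nonneg hm hγ₀ c k ω)

lemma M_tendsto (hm : 3 ≤ m) (hγ₀ : 2 ≤ γ₀) (c : VisChain μ N m γ₀) :
    ∀ᵐ ω ∂μ, ∃ l, Tendsto (fun n => c.M n ω) atTop (𝓝 l) := by
  have hs := M_super hγ₀ c
  have hb : ∀ n, eLpNorm ((-c.M) n) 1 μ ≤ (Real.toNNReal (∫ ω, c.M 0 ω ∂μ) : ENNReal) := by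
    intro n
    rw [Pi.neg_apply, eLpNorm_neg, eLpNorm_one_eq_lintegral_enorm,
      ← ofReal_integral_norm_eq_lintegral_enorm (M_int hγ₀ c n)]
    change _ ≤ ENNReal.ofReal _
    apply ENNReal.ofReal_le_ofReal
    have h1 := hs.setIntegral_le (Nat.zero_le n) (MeasurableSet.univ)
    simp only [Measure.restrict_univ] at h1
    refine le_trans (le_of_eq ?_) h1
    exact integral_congr_ae (Eventually.of_forall fun ω => Real.norm_of_nonneg (M_nonneg hm hγ₀ c n ω))
  filter_upwards [hs.neg.ae_tendsto_limitProcess hb] with ω hω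
  refine ⟨_, hω.neg.congr fun n => ?_⟩
  simp

lemma visGamma_div (hm : 3 ≤ m) (hγ₀ : 2 ≤ γ₀) : ¬ Summable fun n => 1 / visGamma γ₀ m n := by
  intro h
  have hm' : (0:ℝ) < m := by exact_mod_cast (by omega : 0 < m)
  have h2 : Summable fun n : ℕ => (1 / ((n:ℝ) + 1)) := by
    refine Summable.of_nonneg_of_le (fun n => by positivity) (fun n => ?_) (h.mul_left (γ₀ + 2 * m))
    rw [mul_one_div, div_le_div_iff₀ (by positivity) (visGamma_pos hγ₀ n)]
    unfold visGamma
    have : (0:ℝ) ≤ n := by positivity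
    nlinarith [mul_nonneg (by linarith : 0 ≤ γ₀) this]
  have h3 : Summable fun n : ℕ => (1 / ((n:ℝ))) := by
    rw [← summable_nat_add_iff 1]; exact_mod_cast h2
  exact Real.not_summable_one_div_natCast h3

lemma r_tendsto (hγ₀ : 2 ≤ γ₀) (c : VisChain μ N m γ₀) (ω : Ω) :
    ∃ l, Tendsto (fun n => 2 * m / visGamma γ₀ m n * vr (c.X n ω)) atTop (𝓝 l) := by
  have hanti : Antitone fun n => 2 * m / visGamma γ₀ m n * vr (c.X n ω) := by
    refine antitone_nat_of_succ_le fun n => ?_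
    unfold vr
    rw [Finset.mul_sum, Finset.mul_sum]
    refine Finset.sum_le_sum fun i _ => ?_
    change 2 * m / visGamma γ₀ m (n+1) * (1 / c.x (n+1) i ω) ≤ 2 * m / visGamma γ₀ m n * (1 / c.x n i ω)
    rw [div_mul_div_comm, div_mul_div_comm, Z_succ hγ₀]
    have := mul_pos (visGamma_pos (m := m) hγ₀ n) (x_pos hγ₀ c n i ω)
    have := D_nonneg c n i ω
    gcongr
    linarith
  refine ⟨_, tendsto_atTop_ciInf hanti ⟨0, ?_⟩⟩
  rintro _ ⟨n, rfl⟩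
  have hg := visGamma_pos (m := m) hγ₀ n
  have h2 : 0 ≤ vr (c.X n ω) := Finset.sum_nonneg fun i _ => one_div_nonneg.2 (c.nonneg n i ω)
  positivity

end

/-- In the choose-random-visible-type chain with `N ≥ 2` types and `m ≥ 3` choices, for every
type `i`, almost surely the proportion `x_i(n)` converges to `1/N`. -/
theorem visible_type_converges_to_uniform
    {Ω : Type*} [MeasurableSpace Ω] (μ : Measure Ω) [IsProbabilityMeasure μ]
    (N m : ℕ) (hN : 2 ≤ N) (hm : 3 ≤ m) (γ₀ : ℝ) (hγ₀ : 2 ≤ γ₀)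
    (c : VisChain μ N m γ₀) (i : Fin N) :
    ∀ᵐ ω ∂μ, Tendsto (fun n => c.x n i ω) atTop (𝓝 (1 / (N : ℝ))) := by
  filter_upwards [M_tendsto hm hγ₀ c] with ω hω
  obtain ⟨l, hl⟩ := hω
  have hsum : Summable fun n => vG m (c.X n ω) / visGamma γ₀ m n := by
    obtain ⟨B, hB⟩ := hl.bddAbove_range
    refine summable_of_sum_range_le (c := B) (fun n => GX_nonneg hm hγ₀ c n ω) fun n => ?_
    have h1 : c.M n ω ≤ B := hB ⟨n, rfl⟩
    have h2 := V_nonneg hγ₀ c n ω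
    unfold VisChain.M at h1
    linarith
  obtain ⟨r, hr⟩ := r_tendsto hγ₀ c ω
  have hU : Tendsto (fun n => vU (c.X n ω)) atTop
      (𝓝 (l - (∑' n, vG m (c.X n ω) / visGamma γ₀ m n) - r)) := by
    refine ((hl.sub hsum.hasSum.tendsto_sum_nat).sub hr).congr fun n => ?_
    unfold VisChain.M
    ring
  exact vdet hN hm _ (fun n => visGamma_pos hγ₀ n) (visGamma_div hm hγ₀) (fun n => c.X n ω)
    (fun n i => x_pos hγ₀ c n i ω) (fun n => c.sum_eq_one n ω) _ hU hsum i
end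
end
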